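/- arXiv:nlin/0611021 — 2 statements merged into one kernel-verified Lean document; each statement's English description precedes it below -/
import Mathlib

section
/- Let α ∈ (0.5, 0.95) and k̂ = (0,−1), so |k̂+np|² = n² + α². There exists a unique ε_*(α) > 0 satisfying √(32 − 3α⁶ − 17α⁴ − 16α²)/(2(α²+1)(α²+4)) < ε_*(α) < (1/(α²+1))·√((1−α²)/2) (where the quantity under the left square root is positive for α ∈ (0.5,0.95) and the left bound is less than the right bound) such that: (i) for ε > ε_*(α) the line-k̂ spectral problem has no eigenvalue with nonnegative real part; (ii) for ε = ε_*(α), λ = 0 is an eigenvalue and every other eigenvalue has negative real part; (iii) for 0 < ε < ε_*(α) there is a unique positive eigenvalue λ(ε) > 0 and every other eigenvalue has negative real part. -/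
/-- The interaction coefficient
`A(q,r) = (α/2)·[1/(r₁²+(αr₂)²) − 1/(q₁²+(αq₂)²)]·(q₁r₂ − q₂r₁)`. -/
noncomputable def coefA (α : ℝ) (q r : ℤ × ℤ) : ℝ :=
  (α / 2) * (1 / ((r.1 : ℝ) ^ 2 + (α * (r.2 : ℝ)) ^ 2)
      - 1 / ((q.1 : ℝ) ^ 2 + (α * (q.2 : ℝ)) ^ 2)) *
    ((q.1 : ℝ) * (r.2 : ℝ) - (q.2 : ℝ) * (r.1 : ℝ))

/-- The line-`k̂` spectral problem for the linearized 2D Navier–Stokes operator at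
the shear `Ω = 2 cos x₁`. -/
def LineEqn (α ε : ℝ) (k : ℤ × ℤ) (lam : ℂ) (ω : ℤ → ℂ) : Prop :=
  ∀ n : ℤ,
    (↑(coefA α (1, 0) (k.1 + (n - 1), k.2)) : ℂ) * ω (n - 1)
      - (↑(ε * (((k.1 : ℝ) + (n : ℝ)) ^ 2 + (α * (k.2 : ℝ)) ^ 2)) : ℂ) * ω n
      - (↑(coefA α (1, 0) (k.1 + (n + 1), k.2)) : ℂ) * ω (n + 1)
    = lam * ω n

/-- `lam` is an eigenvalue of the line-`k̂` problem: there is a nonzero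
square-summable solution. -/
def IsLineEig (α ε : ℝ) (k : ℤ × ℤ) (lam : ℂ) : Prop :=
  ∃ ω : ℤ → ℂ, Memℓp ω 2 ∧ ω ≠ 0 ∧ LineEqn α ε k lam ω

open Filter Topology

/-- The coefficient `A_n` of the line through `(0,-1)`, as a function of a real variable. -/
noncomputable def shearCoef (α x : ℝ) : ℝ := α / 2 * (1 - 1 / (x ^ 2 + α ^ 2))

lemma shearCoef_neg (α x : ℝ) : shearCoef α (-x) = shearCoef α x := by
  simp [shearCoef]

lemma shearCoef_mono {α x y : ℝ} (hα : 0 < α) (hx : 0 ≤ x) (hxy : x ≤ y) :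
    shearCoef α x ≤ shearCoef α y := by
  unfold shearCoef
  gcongr

lemma shearCoef_one_pos {α : ℝ} (hα : 0 < α) : 0 < shearCoef α 1 := by
  have : shearCoef α 1 = α ^ 3 / (2 * (1 + α ^ 2)) := by
    unfold shearCoef
    field_simp
    ring
  rw [this]
  positivity

lemma shearCoef_pos {α x : ℝ} (hα : 0 < α) (hx : 1 ≤ x) : 0 < shearCoef α x :=
  (shearCoef_one_pos hα).trans_le (shearCoef_mono hα zero_le_one hx)

lemma shearCoef_lt {α : ℝ} (hα : 0 < α) (x : ℝ) : shearCoef α x < α / 2 := by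
  have : 0 < 1 / (x ^ 2 + α ^ 2) := by positivity
  unfold shearCoef
  nlinarith

lemma shearCoef_zero_neg {α : ℝ} (hα : 0 < α) (hα1 : α < 1) : shearCoef α 0 < 0 := by
  have : 1 < 1 / (0 ^ 2 + α ^ 2) := by
    rw [lt_div_iff₀ (by positivity)]
    nlinarith
  unfold shearCoef
  nlinarith

/-- The rate `λ + ε (x² + α²)`. -/
def rate (α ε lam x : ℝ) : ℝ := lam + ε * (x ^ 2 + α ^ 2)

/-- The diagonal coefficient after the substitution `z_n = A_n ω_n`, at site `n + 1`. -/
noncomputable def diag (α ε lam : ℝ) (n : ℕ) : ℝ :=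
  rate α ε lam (n + 1) / shearCoef α (n + 1)

lemma rate_pos {α ε lam : ℝ} (hα : 0 < α) (hε : 0 < ε) (hl : 0 ≤ lam) (x : ℝ) :
    0 < rate α ε lam x := by
  unfold rate
  positivity

lemma shearCoef_succ_pos {α : ℝ} (hα : 0 < α) (n : ℕ) : 0 < shearCoef α (n + 1) :=
  shearCoef_pos hα (by simp)

lemma diag_ge {α ε lam : ℝ} (hα : 0 < α) (hε : 0 < ε) (hl : 0 ≤ lam) (n : ℕ) :
    2 * ε * α ≤ diag α ε lam n := by
  unfold diag
  rw [le_div_iff₀ (shearCoef_succ_pos hα n)]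
  have h1 := shearCoef_lt hα ((n : ℝ) + 1)
  have h2 : 0 < ε * α := by positivity
  have h3 : 0 ≤ ε * ((n : ℝ) + 1) ^ 2 := by positivity
  unfold rate
  nlinarith

/-- A positive solution of the three-term recursion on the half line. -/
structure PosSol (α ε lam : ℝ) (z : ℕ → ℝ) : Prop where
  pos : ∀ n, 0 < z n
  step : ∀ n, z n - z (n + 2) = diag α ε lam n * z (n + 1)

lemma PosSol.summable {α ε lam : ℝ} {z : ℕ → ℝ} (h : PosSol α ε lam z) (hα : 0 < α)
    (hε : 0 < ε) (hl : 0 ≤ lam) : Summable fun n => z n ^ 2 := by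
  rw [← summable_nat_add_iff 1]
  have hδ : 0 < 2 * ε * α := by positivity
  have key : ∀ N, (∑ n ∈ Finset.range N, z (n + 1) ^ 2) * (2 * ε * α) + z N * z (N + 1)
      ≤ z 0 * z 1 := by
    intro N
    induction N with
    | zero => simp
    | succ N ih =>
      rw [Finset.sum_range_succ]
      have h1 := h.step N
      have h2 := diag_ge hα hε hl N
      have h3 := sq_nonneg (z (N + 1))
      have h4 := mul_le_mul_of_nonneg_right h2 h3
      have h5 : z N * z (N + 1) = z (N + 1) * z (N + 2)
          + diag α ε lam N * z (N + 1) ^ 2 := by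
        linear_combination z (N + 1) * h1
      linarith
  refine summable_of_sum_range_le (c := z 0 * z 1 / (2 * ε * α)) (fun n => sq_nonneg _) ?_
  intro N
  rw [le_div_iff₀ hδ]
  have := key N
  have := mul_pos (h.pos N) (h.pos (N + 1))
  linarith

lemma PosSol.tendsto {α ε lam : ℝ} {z : ℕ → ℝ} (h : PosSol α ε lam z) (hα : 0 < α)
    (hε : 0 < ε) (hl : 0 ≤ lam) : Tendsto z atTop (𝓝 0) := by
  have h1 := (h.summable hα hε hl).tendsto_atTop_zero.sqrt
  simpa [Real.sqrt_sq (h.pos _).le] using h1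

/-- The value `e₀ z₀ / z₁` is strictly monotone along the rays and segments used below. -/
lemma PosSol.compare {α ε lam ε' lam' : ℝ} {z x : ℕ → ℝ} (hz : PosSol α ε lam z)
    (hx : PosSol α ε' lam' x) (hα : 0 < α) (hε : 0 < ε) (hl : 0 ≤ lam) (hεε : ε ≤ ε')
    (hll : lam ≤ lam') (hcross : lam * ε' ≤ ε * lam') (hne : lam < lam' ∨ ε < ε') :
    rate α ε lam 0 * (z 0 * x 1) < rate α ε' lam' 0 * (x 0 * z 1) := by
  have hε' : 0 < ε' := hε.trans_le hεε
  have hl' : 0 ≤ lam' := hl.trans hll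
  have hmono : ∀ t, rate α ε lam t ≤ rate α ε' lam' t := by
    intro t
    unfold rate
    gcongr
  have hstrict : rate α ε lam 0 < rate α ε' lam' 0 := by
    unfold rate
    have : 0 < 0 ^ 2 + α ^ 2 := by positivity
    rcases hne with h | h <;> nlinarith
  set e := rate α ε lam 0 with he
  set e' := rate α ε' lam' 0 with he'
  have hepos : 0 < e := rate_pos hα hε hl 0
  have hepos' : 0 < e' := rate_pos hα hε' hl' 0
  let P : ℕ → ℝ := fun k => e * (z (2 * k) * x (2 * k + 1)) - e' * (x (2 * k) * z (2 * k + 1))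
  have hstep : ∀ k, P k < P (k + 1) := by
    intro k
    have z1 := hz.step (2 * k)
    have x1 := hx.step (2 * k)
    have z2 := hz.step (2 * k + 1)
    have x2 := hx.step (2 * k + 1)
    have hodd : e * diag α ε lam (2 * k) < e' * diag α ε' lam' (2 * k) := by
      unfold diag
      have := shearCoef_succ_pos hα (2 * k)
      rw [← mul_div_assoc, ← mul_div_assoc]
      have := mul_lt_mul hstrict (hmono ((2 * k : ℕ) + 1)) (rate_pos hα hε hl _) hepos'.le
      gcongr
    have heven : e * diag α ε' lam' (2 * k + 1) ≤ e' * diag α ε lam (2 * k + 1) := by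
      unfold diag
      have := shearCoef_succ_pos hα (2 * k + 1)
      rw [← mul_div_assoc, ← mul_div_assoc]
      refine div_le_div_of_nonneg_right ?_ this.le
      rw [he, he']
      unfold rate
      have h0 : 0 ≤ (((2 * k + 1 : ℕ) : ℝ) + 1) ^ 2 := by positivity
      nlinarith [mul_le_mul_of_nonneg_right hcross h0]
    have p1 := mul_pos (hz.pos (2 * k + 1)) (hx.pos (2 * k + 1))
    have p2 := mul_pos (hz.pos (2 * k + 2)) (hx.pos (2 * k + 2))
    have m1 := mul_lt_mul_of_pos_right hodd p1
    have m2 := mul_le_mul_of_nonneg_right heven p2.le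
    have id : P k = P (k + 1)
        + (e * diag α ε lam (2 * k) - e' * diag α ε' lam' (2 * k))
          * (z (2 * k + 1) * x (2 * k + 1))
        + (e * diag α ε' lam' (2 * k + 1) - e' * diag α ε lam (2 * k + 1))
          * (z (2 * k + 2) * x (2 * k + 2)) := by
      simp only [P, show 2 * (k + 1) = 2 * k + 2 by ring]
      simp only [add_assoc, show (1 : ℕ) + 2 = 3 by rfl, show (1 : ℕ) + 1 = 2 by rfl]
        at z1 z2 x1 x2 ⊢
      linear_combination e * x (2 * k + 1) * z1 - e' * z (2 * k + 1) * x1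
        + e * z (2 * k + 2) * x2 - e' * x (2 * k + 2) * z2
    linarith
  have hlim : Tendsto P atTop (𝓝 0) := by
    have tz := hz.tendsto hα hε hl
    have tx := hx.tendsto hα hε' hl'
    have t0 : Tendsto (fun k : ℕ => 2 * k) atTop atTop :=
      tendsto_atTop_mono (fun n => (by omega : n ≤ 2 * n)) tendsto_id
    have t1 : Tendsto (fun k : ℕ => 2 * k + 1) atTop atTop :=
      (tendsto_add_atTop_nat 1).comp t0
    simpa [P, Function.comp_def] using
      (((tz.comp t0).mul (tx.comp t1)).const_mul e).sub
        (((tx.comp t0).mul (tz.comp t1)).const_mul e')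
  have hm : StrictMono P := strictMono_nat_of_lt_succ hstep
  have h0 := hm.monotone.ge_of_tendsto hlim 1
  have h1 := hstep 0
  have : P 0 < 0 := h1.trans_le h0
  simp only [P] at this
  simpa [sub_neg] using this

/-- Solvability of `ρ_n = 1 / (d_n + ρ_{n+1})` with continuous dependence on a parameter. -/
lemma exists_continuous_tails {X : Type*} [TopologicalSpace X] (d : ℕ → X → ℝ) {δ : ℝ}
    (hδ : 0 < δ) (hd : ∀ n, Continuous (d n)) (hdδ : ∀ n x, δ ≤ d n x) :
    ∃ ρ : ℕ → X → ℝ, (∀ n, Continuous (ρ n)) ∧ (∀ n x, 0 < ρ n x) ∧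
      ∀ n x, ρ n x * (d n x + ρ (n + 1) x) = 1 := by
  have hpos : ∀ (n : ℕ) (x : X) (t : ℝ), 0 < d n x + max t 0 := fun n x t => by
    have := hdδ n x
    have := le_max_right t 0
    linarith
  have hbd : ∀ (n : ℕ) (x : X) (t : ℝ), ‖(d n x + max t 0)⁻¹‖ ≤ δ⁻¹ := fun n x t => by
    rw [Real.norm_of_nonneg (inv_pos.2 (hpos n x t)).le]
    have := hdδ n x
    have := le_max_right t 0
    gcongr
    linarith
  let S : BoundedContinuousFunction (ℕ × X) ℝ → BoundedContinuousFunction (ℕ × X) ℝ := fun f =>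
    BoundedContinuousFunction.ofNormedAddCommGroup
      (fun p => (d p.1 p.2 + max (f (p.1 + 1, p.2)) 0)⁻¹)
      (by
        rw [continuous_prod_of_discrete_left]
        intro n
        refine Continuous.inv₀ ?_ (fun x => (hpos _ _ _).ne')
        exact (hd n).add ((f.continuous.comp (by fun_prop)).max continuous_const))
      δ⁻¹ (fun p => hbd _ _ _)
  have hS : ∀ f n x, S f (n, x) = (d n x + max (f (n + 1, x)) 0)⁻¹ := fun _ _ _ => rfl
  let K : NNReal := ⟨(1 + δ ^ 2)⁻¹, by positivity⟩
  have hK : K < 1 := by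
    rw [← NNReal.coe_lt_coe]
    exact inv_lt_one_of_one_lt₀ (by nlinarith)
  have hc : ContractingWith K (S ∘ S) := by
    refine ⟨hK, LipschitzWith.of_dist_le_mul fun f g => ?_⟩
    refine (BoundedContinuousFunction.dist_le (by positivity)).2 ?_
    rintro ⟨n, x⟩
    have h1 : dist (f (n + 1 + 1, x)) (g (n + 1 + 1, x)) ≤ dist f g :=
      BoundedContinuousFunction.dist_coe_le_dist _
    rw [Real.dist_eq] at h1
    have h2 : |max (f (n + 1 + 1, x)) 0 - max (g (n + 1 + 1, x)) 0| ≤ dist f g :=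
      (abs_max_sub_max_le_abs _ _ _).trans h1
    simp only [Function.comp_apply, hS, Real.dist_eq]
    rw [max_eq_left (inv_pos.2 (hpos _ _ _)).le, max_eq_left (inv_pos.2 (hpos _ _ _)).le]
    have hs0 := le_max_right (f (n + 1 + 1, x)) 0
    have ht0 := le_max_right (g (n + 1 + 1, x)) 0
    generalize max (f (n + 1 + 1, x)) 0 = s at *
    generalize max (g (n + 1 + 1, x)) 0 = t at *
    have ha := hdδ n x
    have hb := hdδ (n + 1) x
    generalize d n x = a at *
    generalize d (n + 1) x = b at *
    have ha0 : 0 < a := hδ.trans_le ha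
    have hb0 : 0 < b := hδ.trans_le hb
    have hu : 1 + δ ^ 2 ≤ a * (b + s) + 1 := by nlinarith
    have hv : 1 ≤ a * (b + t) + 1 := by nlinarith
    have hid : (a + (b + s)⁻¹)⁻¹ - (a + (b + t)⁻¹)⁻¹
        = (s - t) / ((a * (b + s) + 1) * (a * (b + t) + 1)) := by
      have : b + s ≠ 0 := by positivity
      have : b + t ≠ 0 := by positivity
      have : a * (b + s) + 1 ≠ 0 := by positivity
      have : a * (b + t) + 1 ≠ 0 := by positivity
      field_simp
      ring
    have hQ : 1 + δ ^ 2 ≤ (a * (b + s) + 1) * (a * (b + t) + 1) := by nlinarith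
    have hQ0 : 0 < 1 + δ ^ 2 := by positivity
    rw [hid, abs_div, abs_of_pos (hQ0.trans_le hQ), div_eq_inv_mul]
    change _ ≤ (1 + δ ^ 2)⁻¹ * dist f g
    gcongr
  set p := hc.fixedPoint (S ∘ S) with hp
  have hfix : S (S p) = p := hc.fixedPoint_isFixedPt
  have hSp : S p = p := hc.fixedPoint_unique (x := S p) (by
    change S (S (S p)) = S p
    rw [hfix])
  have hval : ∀ n x, p (n, x) = (d n x + max (p (n + 1, x)) 0)⁻¹ := fun n x => by
    rw [← hS, hSp]
  have hppos : ∀ n x, 0 < p (n, x) := fun n x => by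
    rw [hval]
    exact inv_pos.2 (hpos _ _ _)
  refine ⟨fun n x => p (n, x), fun n => p.continuous.comp (by fun_prop), hppos, fun n x => ?_⟩
  have := hval n x
  rw [max_eq_left (hppos _ _).le] at this
  have h0 := hppos (n + 1) x
  have h1 := hdδ n x
  change p (n, x) * (d n x + p (n + 1, x)) = 1
  rw [this]
  exact inv_mul_cancel₀ (by linarith)

/-- The complex diagonal coefficient at site `n + 1`. -/
noncomputable def cdiag (α ε : ℝ) (lam : ℂ) (n : ℕ) : ℂ :=
  (lam + (ε * (((n : ℝ) + 1) ^ 2 + α ^ 2) : ℝ)) / (shearCoef α (n + 1) : ℝ)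

/-- A decaying complex solution of the three-term recursion on the half line. -/
structure CSol (α ε : ℝ) (lam : ℂ) (z : ℕ → ℂ) : Prop where
  tendsto : Tendsto z atTop (𝓝 0)
  step : ∀ n, z n - z (n + 2) = cdiag α ε lam n * z (n + 1)

lemma cdiag_re (α ε : ℝ) (lam : ℂ) (n : ℕ) : (cdiag α ε lam n).re = diag α ε lam.re n := by
  simp only [cdiag, diag, rate, Complex.div_ofReal_re, Complex.add_re, Complex.ofReal_re]

lemma cdiag_im (α ε : ℝ) (lam : ℂ) (n : ℕ) :
    (cdiag α ε lam n).im = lam.im / shearCoef α (n + 1) := by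
  simp only [cdiag, Complex.div_ofReal_im, Complex.add_im, Complex.ofReal_im, add_zero]

lemma diag_pos {α ε lam : ℝ} (hα : 0 < α) (hε : 0 < ε) (hl : 0 ≤ lam) (n : ℕ) :
    0 < diag α ε lam n :=
  (by positivity : 0 < 2 * ε * α).trans_le (diag_ge hα hε hl n)

/-- A decaying solution vanishing at the origin vanishes identically. -/
lemma CSol.eq_zero {α ε : ℝ} {lam : ℂ} {z : ℕ → ℂ} (h : CSol α ε lam z) (hα : 0 < α)
    (hε : 0 < ε) (hl : 0 ≤ lam.re) (h0 : z 0 = 0) (n : ℕ) : z n = 0 := by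
  let c : ℕ → ℝ := fun n => (z n).re * (z (n + 1)).re + (z n).im * (z (n + 1)).im
  have hc : ∀ n, c n = c (n + 1)
      + diag α ε lam.re n * ((z (n + 1)).re ^ 2 + (z (n + 1)).im ^ 2) := by
    intro n
    have h1 := congrArg Complex.re (h.step n)
    have h2 := congrArg Complex.im (h.step n)
    simp only [Complex.sub_re, Complex.sub_im, Complex.mul_re, Complex.mul_im, cdiag_re] at h1 h2
    simp only [c]
    linear_combination (z (n + 1)).re * h1 + (z (n + 1)).im * h2
  have hanti : Antitone c := antitone_nat_of_succ_le fun n => by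
    have := diag_pos hα hε hl n
    rw [hc n]
    have : 0 ≤ diag α ε lam.re n * ((z (n + 1)).re ^ 2 + (z (n + 1)).im ^ 2) := by positivity
    linarith
  have hlim : Tendsto c atTop (𝓝 0) := by
    have hre := (Complex.continuous_re.tendsto 0).comp h.tendsto
    have him := (Complex.continuous_im.tendsto 0).comp h.tendsto
    simpa [c, Function.comp_def] using
      (hre.mul ((tendsto_add_atTop_iff_nat 1).2 hre)).add
        (him.mul ((tendsto_add_atTop_iff_nat 1).2 him))
  have hnn : ∀ n, 0 ≤ c n := hanti.le_of_tendsto hlim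
  cases n with
  | zero => exact h0
  | succ n =>
    have hc0 : c 0 = 0 := by simp [c, h0]
    have h1 : c n ≤ c 0 := hanti (Nat.zero_le n)
    have h2 := hnn (n + 1)
    have h3 := hc n
    have h4 := diag_pos hα hε hl n
    have h5 : (z (n + 1)).re ^ 2 + (z (n + 1)).im ^ 2 ≤ 0 := by
      by_contra! hcon
      have := mul_pos h4 hcon
      linarith
    have h6 := sq_nonneg (z (n + 1)).re
    have h7 := sq_nonneg (z (n + 1)).im
    exact Complex.ext (pow_eq_zero_iff two_ne_zero |>.1 (by linarith))
      (pow_eq_zero_iff two_ne_zero |>.1 (by linarith))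

/-- A decaying solution matching the symmetric condition at the origin forces `lam` to be real. -/
lemma CSol.im_eq_zero {α ε : ℝ} {lam : ℂ} {z : ℕ → ℂ} (h : CSol α ε lam z) (hα : 0 < α)
    (hε : 0 < ε) (hl : 0 ≤ lam.re) (h0 : z 0 ≠ 0) {b : ℝ}
    (hb : (lam + (ε * α ^ 2 : ℝ)) * z 0 = b * z 1) : lam.im = 0 := by
  by_contra hy
  have hy2 : 0 < lam.im ^ 2 := by positivity
  set e := lam.re + ε * α ^ 2 with he
  have hepos : 0 < e := by positivity
  let g : ℕ → ℝ := fun k =>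
    lam.im * (e * ((z (2 * k)).im * (z (2 * k + 1)).re - (z (2 * k)).re * (z (2 * k + 1)).im)
      + lam.im * ((z (2 * k)).re * (z (2 * k + 1)).re + (z (2 * k)).im * (z (2 * k + 1)).im))
  have hg : ∀ k, ∃ r, 0 ≤ r ∧ g k = g (k + 1) + r
      + lam.im ^ 2 * (e / shearCoef α ((2 * k : ℕ) + 1) + diag α ε lam.re (2 * k))
        * ((z (2 * k + 1)).re ^ 2 + (z (2 * k + 1)).im ^ 2) := by
    intro k
    have h1 := congrArg Complex.re (h.step (2 * k))
    have h2 := congrArg Complex.im (h.step (2 * k))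
    have h3 := congrArg Complex.re (h.step (2 * k + 1))
    have h4 := congrArg Complex.im (h.step (2 * k + 1))
    simp only [Complex.sub_re, Complex.sub_im, Complex.mul_re, Complex.mul_im, cdiag_re,
      cdiag_im] at h1 h2 h3 h4
    refine ⟨lam.im ^ 2 * (diag α ε lam.re (2 * k + 1) - e / shearCoef α ((2 * k + 1 : ℕ) + 1))
      * ((z (2 * k + 2)).re ^ 2 + (z (2 * k + 2)).im ^ 2), ?_, ?_⟩
    · have hA := shearCoef_succ_pos hα (2 * k + 1)
      have : 0 ≤ diag α ε lam.re (2 * k + 1) - e / shearCoef α ((2 * k + 1 : ℕ) + 1) := by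
        unfold diag rate
        rw [← sub_div]
        apply div_nonneg _ hA.le
        have : 0 ≤ ε * (((2 * k + 1 : ℕ) : ℝ) + 1) ^ 2 := by positivity
        rw [he]
        linarith
      positivity
    · simp only [g, show 2 * (k + 1) = 2 * k + 2 by ring]
      simp only [add_assoc, show (1 : ℕ) + 2 = 3 by rfl, show (1 : ℕ) + 1 = 2 by rfl]
        at h1 h2 h3 h4 ⊢
      generalize z (2 * k) = z0 at *
      generalize z (2 * k + 1) = z1 at *
      generalize z (2 * k + 2) = z2 at *
      generalize z (2 * k + 3) = z3 at *
      generalize diag α ε lam.re (2 * k) = d1 at *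
      generalize diag α ε lam.re (2 * k + 1) = d2 at *
      generalize shearCoef α _ = A1 at *
      generalize shearCoef α _ = A2 at *
      linear_combination lam.im * (e * z1.re + lam.im * z1.im) * h2
        + lam.im * (lam.im * z1.re - e * z1.im) * h1
        + lam.im * (lam.im * z2.re + e * z2.im) * h3
        + lam.im * (lam.im * z2.im - e * z2.re) * h4
  have hpos1 : 0 < lam.im ^ 2 * (e / shearCoef α ((2 * 0 : ℕ) + 1) + diag α ε lam.re (2 * 0)) := by
    have := shearCoef_succ_pos hα (2 * 0)
    have := diag_pos hα hε hl (2 * 0)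
    positivity
  have hanti : Antitone g := antitone_nat_of_succ_le fun k => by
    obtain ⟨r, hr, hk⟩ := hg k
    have := shearCoef_succ_pos hα (2 * k)
    have := diag_pos hα hε hl (2 * k)
    have : 0 ≤ lam.im ^ 2 * (e / shearCoef α ((2 * k : ℕ) + 1) + diag α ε lam.re (2 * k))
        * ((z (2 * k + 1)).re ^ 2 + (z (2 * k + 1)).im ^ 2) := by positivity
    linarith
  have hlim : Tendsto g atTop (𝓝 0) := by
    have t0 : Tendsto (fun k : ℕ => 2 * k) atTop atTop :=
      tendsto_atTop_mono (fun n => (by omega : n ≤ 2 * n)) tendsto_id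
    have t1 : Tendsto (fun k : ℕ => 2 * k + 1) atTop atTop :=
      (tendsto_add_atTop_nat 1).comp t0
    have hre := (Complex.continuous_re.tendsto 0).comp h.tendsto
    have him := (Complex.continuous_im.tendsto 0).comp h.tendsto
    simpa [g, Function.comp_def] using
      (((((him.comp t0).mul (hre.comp t1)).sub ((hre.comp t0).mul (him.comp t1))).const_mul e).add
        ((((hre.comp t0).mul (hre.comp t1)).add
          ((him.comp t0).mul (him.comp t1))).const_mul lam.im)).const_mul lam.im
  have hg1 : 0 ≤ g 1 := hanti.le_of_tendsto hlim 1
  have hb1 := congrArg Complex.re hb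
  have hb2 := congrArg Complex.im hb
  simp only [Complex.mul_re, Complex.mul_im, Complex.add_re, Complex.add_im, Complex.ofReal_re,
    Complex.ofReal_im, ← he] at hb1 hb2
  have hg0 : g 0 = 0 := by
    simp only [g]
    linear_combination lam.im * (z 1).re * hb2 - lam.im * (z 1).im * hb1
  obtain ⟨r, hr, hk⟩ := hg 0
  have hz1 : (z 1).re ^ 2 + (z 1).im ^ 2 ≤ 0 := by
    by_contra! hcon
    have := mul_pos hpos1 hcon
    simp only [mul_zero, zero_add] at hk this
    linarith
  have h6 := sq_nonneg (z 1).re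
  have h7 := sq_nonneg (z 1).im
  have hz : z 1 = 0 := Complex.ext (pow_eq_zero_iff two_ne_zero |>.1 (by linarith))
      (pow_eq_zero_iff two_ne_zero |>.1 (by linarith))
  rw [hz, mul_zero] at hb
  rcases mul_eq_zero.1 hb with h8 | h8
  · have := congrArg Complex.im h8
    rw [Complex.add_im, Complex.ofReal_im, add_zero] at this
    exact hy this
  · exact h0 h8

/-- For real `lam`, a normalized complex solution yields a positive one. -/
lemma CSol.exists_posSol {α ε lam : ℝ} {z : ℕ → ℂ} (h : CSol α ε lam z) (hα : 0 < α)
    (hε : 0 < ε) (hl : 0 ≤ lam) (h0 : z 0 = 1) : PosSol α ε lam fun n => (z n).re := by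
  have hd : ∀ n, cdiag α ε lam n = (diag α ε lam n : ℝ) := fun n => by
    apply Complex.ext
    · simp [cdiag_re]
    · simp [cdiag_im]
  have hstep : ∀ n, (z n).re - (z (n + 2)).re = diag α ε lam n * (z (n + 1)).re := fun n => by
    have := congrArg Complex.re (h.step n)
    simpa [hd] using this
  refine ⟨?_, hstep⟩
  let c : ℕ → ℝ := fun n => (z n).re * (z (n + 1)).re
  have hc : ∀ n, c n = c (n + 1) + diag α ε lam n * (z (n + 1)).re ^ 2 := fun n => by
    simp only [c]
    linear_combination (z (n + 1)).re * hstep n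
  have hanti : Antitone c := antitone_nat_of_succ_le fun n => by
    have := diag_pos hα hε hl n
    have : 0 ≤ diag α ε lam n * (z (n + 1)).re ^ 2 := by positivity
    rw [hc n]
    linarith
  have hlim : Tendsto c atTop (𝓝 0) := by
    have hre := (Complex.continuous_re.tendsto 0).comp h.tendsto
    simpa [c, Function.comp_def] using hre.mul ((tendsto_add_atTop_iff_nat 1).2 hre)
  have hnn : ∀ n, 0 ≤ c n := hanti.le_of_tendsto hlim
  have hne : ∀ n, 0 < (z n).re → 0 < (z (n + 1)).re := by
    intro n hn
    have h1 : 0 ≤ (z (n + 1)).re := nonneg_of_mul_nonneg_right (hnn n) hn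
    refine h1.lt_of_ne' fun hz => ?_
    have h2 := hstep n
    rw [hz] at h2
    have hcn : c (n + 1) = 0 := by simp [c, hz]
    have h3 := hc (n + 1)
    have h4 := hnn (n + 1 + 1)
    have h5 : (z (n + 2)).re = 0 := by
      have h6 := diag_pos hα hε hl (n + 1)
      by_contra hcon
      have : 0 < diag α ε lam (n + 1) * (z (n + 2)).re ^ 2 := by positivity
      have h7 : c (n + 1) = c (n + 1 + 1) + diag α ε lam (n + 1) * (z (n + 2)).re ^ 2 := h3
      linarith
    rw [h5] at h2
    linarith
  intro n
  induction n with
  | zero => simp [h0]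
  | succ n ih => exact hne n ih

lemma lineEqn_iff {α ε : ℝ} {lam : ℂ} {ω : ℤ → ℂ} :
    LineEqn α ε (0, -1) lam ω ↔ ∀ n : ℤ,
      (shearCoef α ((n - 1 : ℤ) : ℝ) : ℂ) * ω (n - 1)
        - (shearCoef α ((n + 1 : ℤ) : ℝ) : ℂ) * ω (n + 1)
      = (lam + (ε * ((n : ℝ) ^ 2 + α ^ 2) : ℝ)) * ω n := by
  have hA : ∀ m : ℤ, coefA α (1, 0) (m, -1) = shearCoef α m := fun m => by
    simp [coefA, shearCoef]
    ring
  unfold LineEqn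
  refine forall_congr' fun n => ?_
  simp only [zero_add, hA, Int.cast_zero, Int.cast_neg, Int.cast_one, mul_neg, mul_one, neg_sq]
  constructor <;> intro h <;> linear_combination h

lemma tendsto_of_memℓp {ω : ℤ → ℂ} (h : Memℓp ω 2) : Tendsto ω cofinite (𝓝 0) := by
  have h1 : Summable fun n => ‖ω n‖ ^ (2 : ℝ) := by
    simpa using h.summable (by norm_num)
  have h2 := h1.tendsto_cofinite_zero
  rw [tendsto_zero_iff_norm_tendsto_zero]
  have h3 : Tendsto (fun n => √(‖ω n‖ ^ 2)) cofinite (𝓝 0) := by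
    simpa using h2.sqrt
  simpa [Real.sqrt_sq (norm_nonneg _)] using h3

lemma shearCoef_ne_zero {α : ℝ} (hα : 0 < α) (hα1 : α < 1) (n : ℤ) : shearCoef α n ≠ 0 := by
  rcases lt_trichotomy n 0 with h | h | h
  · rw [← neg_neg (n : ℝ), shearCoef_neg]
    refine (shearCoef_pos hα ?_).ne'
    exact_mod_cast (by omega : 1 ≤ -n)
  · subst h
    simpa using (shearCoef_zero_neg hα hα1).ne
  · refine (shearCoef_pos hα ?_).ne'
    exact_mod_cast (by omega : 1 ≤ n)

lemma IsLineEig.exists_cSol {α ε : ℝ} {lam : ℂ} (h : IsLineEig α ε (0, -1) lam) (hα : 0 < α)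
    (hα1 : α < 1) (hε : 0 < ε) (hl : 0 ≤ lam.re) :
    ∃ z, CSol α ε lam z ∧ z 0 = 1 ∧
      (lam + (ε * α ^ 2 : ℝ)) * z 0 = ((-2 * shearCoef α 0 : ℝ) : ℂ) * z 1 := by
  obtain ⟨ω, hω, hω0, hL⟩ := h
  rw [lineEqn_iff] at hL
  let Z : ℤ → ℂ := fun n => (shearCoef α (n : ℝ) : ℂ) * ω n
  have hZ : ∀ n, Z (n - 1) - Z (n + 1) = (lam + (ε * ((n : ℝ) ^ 2 + α ^ 2) : ℝ)) * ω n := hL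
  have hZ0 : Tendsto Z cofinite (𝓝 0) := by
    have hω1 := (tendsto_of_memℓp hω).norm
    rw [norm_zero] at hω1
    set C := α / 2 + |shearCoef α 0|
    refine squeeze_zero_norm (a := fun n => C * ‖ω n‖) (fun n => ?_) (by simpa using hω1.const_mul C)
    simp only [Z, norm_mul, Complex.norm_real]
    gcongr
    rw [Real.norm_eq_abs, abs_le]
    have h1 := shearCoef_lt hα (n : ℝ)
    have h2 : shearCoef α 0 ≤ shearCoef α n := by
      rw [show shearCoef α n = shearCoef α |(n : ℝ)| by simp [shearCoef]]
      exact shearCoef_mono hα le_rfl (abs_nonneg _)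
    have h3 := neg_abs_le (shearCoef α 0)
    have h4 := abs_nonneg (shearCoef α 0)
    constructor <;> simp only [C] <;> linarith
  have hcd : ∀ (n : ℕ) (m : ℤ), (m : ℝ) = n + 1 ∨ (m : ℝ) = -(n + 1) →
      cdiag α ε lam n * Z m = (lam + (ε * ((m : ℝ) ^ 2 + α ^ 2) : ℝ)) * ω m := by
    intro n m hm
    have hA : (shearCoef α (n + 1) : ℂ) ≠ 0 := by
      exact_mod_cast (shearCoef_succ_pos hα n).ne'
    have h1 : shearCoef α (m : ℝ) = shearCoef α (n + 1) := by
      rcases hm with h | h <;> rw [h]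
      rw [shearCoef_neg]
    have h2 : (m : ℝ) ^ 2 = ((n : ℝ) + 1) ^ 2 := by
      rcases hm with h | h <;> rw [h]
      ring
    simp only [cdiag, Z, h1, h2]
    field_simp
  have hp : CSol α ε lam fun n => Z n := by
    refine ⟨hZ0.comp (Nat.cofinite_eq_atTop ▸ (Nat.cast_injective (R := ℤ)).tendsto_cofinite),
      fun n => ?_⟩
    rw [hcd n _ (by left; push_cast; ring), ← hZ]
    congr 2
    push_cast
    ring
  have hq : CSol α ε lam fun n => (-1) ^ n * Z (-n) := by
    have hinj : Function.Injective fun n : ℕ => -(n : ℤ) := fun a b hab => by simpa using hab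
    refine ⟨?_, fun n => ?_⟩
    · have h1 := (hZ0.comp hinj.tendsto_cofinite).norm
      rw [Nat.cofinite_eq_atTop, norm_zero] at h1
      refine squeeze_zero_norm (fun n => ?_) h1
      simp
    · have h1 := hcd n (-((n + 1 : ℕ) : ℤ)) (by right; push_cast; ring)
      rw [← hZ] at h1
      have e1 : -((n + 1 : ℕ) : ℤ) - 1 = -((n + 2 : ℕ) : ℤ) := by push_cast; ring
      have e2 : -((n + 1 : ℕ) : ℤ) + 1 = -(n : ℤ) := by push_cast; ring
      rw [e1, e2] at h1
      linear_combination (-1) ^ n * h1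
  have hz0 : Z 0 ≠ 0 := by
    intro hz
    apply hω0
    funext n
    have : Z n = 0 := by
      obtain ⟨m, rfl | rfl⟩ := n.eq_nat_or_neg
      · exact hp.eq_zero hα hε hl (by simpa using hz) m
      · simpa using hq.eq_zero hα hε hl (by simpa using hz) m
    have hA : (shearCoef α n : ℂ) ≠ 0 := by exact_mod_cast shearCoef_ne_zero hα hα1 n
    simpa [Z, hA] using this
  refine ⟨fun n => (Z n + (-1) ^ n * Z (-n)) / (2 * Z 0), ⟨?_, fun n => ?_⟩, ?_, ?_⟩
  · simpa using (hp.tendsto.add hq.tendsto).div_const (2 * Z 0)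
  · have h1 := hp.step n
    have h2 := hq.step n
    field_simp
    linear_combination h1 + h2
  · simp
    field_simp
    norm_num
  · have h1 := hZ 0
    simp only [zero_sub, zero_add, Int.cast_zero] at h1
    have h2 : Z 0 = shearCoef α 0 * ω 0 := by simp [Z]
    push_cast at h1 ⊢
    simp only [pow_zero, one_mul, neg_zero, pow_one]
    field_simp
    linear_combination -2 * shearCoef α 0 * h1 + 2 * (lam + ε * α ^ 2) * h2

lemma PosSol.isLineEig {α ε lam : ℝ} {z : ℕ → ℝ} (h : PosSol α ε lam z) (hα : 0 < α)
    (hα1 : α < 1) (hε : 0 < ε) (hl : 0 ≤ lam)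
    (hb : rate α ε lam 0 * z 0 = -2 * shearCoef α 0 * z 1) : IsLineEig α ε (0, -1) lam := by
  let Z : ℤ → ℝ := fun n => if 0 ≤ n then z n.natAbs else (-1) ^ n.natAbs * z n.natAbs
  have hZp : ∀ n : ℕ, Z n = z n := fun n => by simp [Z]
  have hZn : ∀ n : ℕ, Z (-n) = (-1) ^ n * z n := fun n => by
    rcases n.eq_zero_or_pos with rfl | hn
    · simp [Z]
    · simp only [Z]
      rw [if_neg (by omega)]
      simp
  have hs : Summable fun n => z n ^ 2 := h.summable hα hε hl
  refine ⟨fun n => ((Z n / shearCoef α n : ℝ) : ℂ), ?_, ?_, ?_⟩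
  · apply memℓp_gen
    have hZs : Summable fun n : ℤ => Z n ^ 2 := by
      apply Summable.of_nat_of_neg
      · simpa [hZp] using hs
      · simpa [hZn, mul_pow, ← pow_mul, mul_comm _ 2] using hs
    set C := max ((shearCoef α 0 ^ 2)⁻¹) ((shearCoef α 1 ^ 2)⁻¹)
    refine Summable.of_nonneg_of_le (fun n => by positivity) (fun n => ?_) (hZs.mul_left C)
    simp only [Complex.norm_real, ENNReal.toReal_ofNat, Real.rpow_ofNat, Real.norm_eq_abs, sq_abs]
    rw [div_pow, div_eq_inv_mul]
    gcongr
    by_cases hn : n = 0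
    · subst hn
      simp [C]
    · refine le_trans ?_ (le_max_right _ _)
      have h1 := shearCoef_one_pos hα
      gcongr
      rw [show shearCoef α n = shearCoef α |(n : ℝ)| by simp [shearCoef]]
      refine shearCoef_mono hα zero_le_one ?_
      exact_mod_cast Int.one_le_abs hn
  · intro hcon
    have := congrFun hcon 0
    have h1 := hZp 0
    have h2 := (shearCoef_zero_neg hα hα1).ne
    have h3 := (h.pos 0).ne'
    simp only [Nat.cast_zero] at h1
    simp [h1, h2, h3] at this
  · rw [lineEqn_iff]
    intro n
    have key : Z (n - 1) - Z (n + 1) = rate α ε lam n / shearCoef α n * Z n := by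
      obtain ⟨m, rfl | rfl⟩ := n.eq_nat_or_neg
      · cases m with
        | zero =>
          have e1 := hZp 1
          have e2 := hZn 1
          have e3 := hZp 0
          simp only [Nat.cast_zero, Nat.cast_one, pow_one] at e1 e2 e3
          have h2 := (shearCoef_zero_neg hα hα1).ne
          simp only [Nat.cast_zero, zero_sub, zero_add, Int.cast_zero, e1, e2, e3]
          field_simp
          linear_combination -hb
        | succ m =>
          rw [show ((m + 1 : ℕ) : ℤ) - 1 = (m : ℕ) by push_cast; ring,
            show ((m + 1 : ℕ) : ℤ) + 1 = (m + 2 : ℕ) by push_cast; ring, hZp, hZp, hZp, h.step]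
          simp [diag]
      · cases m with
        | zero =>
          have e1 := hZp 1
          have e2 := hZn 1
          have e3 := hZp 0
          simp only [Nat.cast_zero, Nat.cast_one, pow_one] at e1 e2 e3
          have h2 := (shearCoef_zero_neg hα hα1).ne
          simp only [Nat.cast_zero, neg_zero, zero_sub, zero_add, Int.cast_zero, e1, e2, e3]
          field_simp
          linear_combination -hb
        | succ m =>
          rw [show -((m + 1 : ℕ) : ℤ) - 1 = -((m + 2 : ℕ) : ℤ) by push_cast; ring,
            show -((m + 1 : ℕ) : ℤ) + 1 = -((m : ℕ) : ℤ) by push_cast; ring, hZn, hZn, hZn]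
          have h1 := h.step m
          have h2 : rate α ε lam ((-((m + 1 : ℕ) : ℤ) : ℤ) : ℝ)
              / shearCoef α ((-((m + 1 : ℕ) : ℤ) : ℤ) : ℝ) = diag α ε lam m := by
            push_cast
            rw [shearCoef_neg]
            simp only [diag, rate, neg_sq]
          rw [h2]
          linear_combination (-1) ^ (m + 1) * h1
    have hA := shearCoef_ne_zero hα hα1
    have hA1 := hA (n - 1)
    have hA2 := hA (n + 1)
    have hA3 := hA n
    have : shearCoef α ((n - 1 : ℤ) : ℝ) * (Z (n - 1) / shearCoef α ((n - 1 : ℤ) : ℝ))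
        - shearCoef α ((n + 1 : ℤ) : ℝ) * (Z (n + 1) / shearCoef α ((n + 1 : ℤ) : ℝ))
        = (lam + ε * ((n : ℝ) ^ 2 + α ^ 2)) * (Z n / shearCoef α n) := by
      rw [mul_div_cancel₀ _ hA1, mul_div_cancel₀ _ hA2, key]
      simp only [rate]
      ring
    exact_mod_cast this

/-- The pair `(ε, lam)` admits a positive half-line solution satisfying the symmetric matching
condition at the origin. -/
def Critical (α ε lam : ℝ) : Prop :=
  ∃ z, PosSol α ε lam z ∧ rate α ε lam 0 * z 0 = -2 * shearCoef α 0 * z 1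

lemma Critical.isLineEig {α ε lam : ℝ} (h : Critical α ε lam) (hα : 0 < α) (hα1 : α < 1)
    (hε : 0 < ε) (hl : 0 ≤ lam) : IsLineEig α ε (0, -1) lam := by
  obtain ⟨z, hz, hb⟩ := h
  exact hz.isLineEig hα hα1 hε hl hb

lemma IsLineEig.critical {α ε : ℝ} {lam : ℂ} (h : IsLineEig α ε (0, -1) lam) (hα : 0 < α)
    (hα1 : α < 1) (hε : 0 < ε) (hl : 0 ≤ lam.re) : lam = lam.re ∧ Critical α ε lam.re := by
  obtain ⟨z, hz, hz0, hb⟩ := h.exists_cSol hα hα1 hε hl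
  have him := hz.im_eq_zero hα hε hl (by simp [hz0]) hb
  have hlam : lam = lam.re := Complex.ext rfl (by simpa using him)
  refine ⟨hlam, fun n => (z n).re, ?_, ?_⟩
  · rw [hlam] at hz
    exact hz.exists_posSol hα hε hl hz0
  · have := congrArg Complex.re hb
    rw [hlam, ← Complex.ofReal_add, Complex.re_ofReal_mul, Complex.re_ofReal_mul] at this
    simpa [rate] using this

lemma Critical.false_of_lt {α ε lam ε' lam' : ℝ} (h : Critical α ε lam)
    (h' : Critical α ε' lam') (hα : 0 < α) (hε : 0 < ε) (hl : 0 ≤ lam) (hεε : ε ≤ ε')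
    (hll : lam ≤ lam') (hcross : lam * ε' ≤ ε * lam') (hne : lam < lam' ∨ ε < ε') : False := by
  obtain ⟨z, hz, hzb⟩ := h
  obtain ⟨x, hx, hxb⟩ := h'
  have := hz.compare hx hα hε hl hεε hll hcross hne
  rw [← mul_assoc, ← mul_assoc, hzb, hxb] at this
  linarith

/-- Positive solutions exist along a continuous family of parameters, and the first ratio depends
continuously on the parameter. -/
lemma exists_posSol_family {X : Type*} [TopologicalSpace X] {α ε₀ : ℝ} {ε lam : X → ℝ}
    (hα : 0 < α) (hε₀ : 0 < ε₀) (hε : ∀ x, ε₀ ≤ ε x) (hl : ∀ x, 0 ≤ lam x)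
    (hεc : Continuous ε) (hlc : Continuous lam) :
    ∃ r : X → ℝ, Continuous r ∧ ∀ x, ∃ z, PosSol α (ε x) (lam x) z ∧ z 0 = 1 ∧ z 1 = r x := by
  obtain ⟨ρ, hρc, hρ, hρ1⟩ := exists_continuous_tails (δ := 2 * ε₀ * α)
    (fun n x => diag α (ε x) (lam x) n) (by positivity)
    (fun n => by unfold diag rate; fun_prop)
    (fun n x => le_trans (by gcongr; exact hε x) (diag_ge hα (hε₀.trans_le (hε x)) (hl x) n))
  refine ⟨ρ 0, hρc 0, fun x => ⟨fun n => ∏ i ∈ Finset.range n, ρ i x, ⟨fun n => ?_, fun n => ?_⟩,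
    by simp, by simp⟩⟩
  · exact Finset.prod_pos fun i _ => hρ i x
  · simp only [Finset.prod_range_succ]
    linear_combination -(∏ i ∈ Finset.range n, ρ i x) * hρ1 n x

lemma exists_critical {X : Type*} [TopologicalSpace X] [PreconnectedSpace X] {α ε₀ : ℝ}
    {ε lam : X → ℝ} (hα : 0 < α) (hε₀ : 0 < ε₀) (hε : ∀ x, ε₀ ≤ ε x) (hl : ∀ x, 0 ≤ lam x)
    (hεc : Continuous ε) (hlc : Continuous lam) {p q : X}
    (hp : ∀ z, PosSol α (ε p) (lam p) z →
      rate α (ε p) (lam p) 0 * z 0 ≤ -2 * shearCoef α 0 * z 1)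
    (hq : ∀ z, PosSol α (ε q) (lam q) z →
      -2 * shearCoef α 0 * z 1 ≤ rate α (ε q) (lam q) 0 * z 0) :
    ∃ x, Critical α (ε x) (lam x) := by
  obtain ⟨r, hrc, hr⟩ := exists_posSol_family hα hε₀ hε hl hεc hlc
  have hrate : Continuous fun x => rate α (ε x) (lam x) 0 := by
    unfold rate
    fun_prop
  obtain ⟨x, hx⟩ := intermediate_value_univ₂ (a := p) (b := q) hrate
    (continuous_const.mul hrc : Continuous fun x => -2 * shearCoef α 0 * r x)
    (by
      obtain ⟨z, hz, h0, h1⟩ := hr p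
      simpa [h0, h1] using hp z hz)
    (by
      obtain ⟨z, hz, h0, h1⟩ := hr q
      simpa [h0, h1] using hq z hz)
  obtain ⟨z, hz, h0, h1⟩ := hr x
  exact ⟨x, z, hz, by rw [h0, h1, mul_one]; exact hx⟩

lemma PosSol.diag_mul_lt {α ε lam : ℝ} {z : ℕ → ℝ} (h : PosSol α ε lam z) (n : ℕ) :
    diag α ε lam n * z (n + 1) < z n := by
  have := h.step n
  have := h.pos (n + 2)
  linarith

lemma shearCoef_zero {α : ℝ} (hα : 0 < α) : -2 * shearCoef α 0 = (1 - α ^ 2) / α := by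
  unfold shearCoef
  field_simp
  ring

lemma diag_zero {α : ℝ} (hα : 0 < α) (ε lam : ℝ) :
    diag α ε lam 0 = rate α ε lam 1 * (2 * (1 + α ^ 2)) / α ^ 3 := by
  unfold diag shearCoef
  simp only [Nat.cast_zero, zero_add]
  field_simp
  ring

lemma diag_one {α : ℝ} (hα : 0 < α) (ε lam : ℝ) :
    diag α ε lam 1 = rate α ε lam 2 * (2 * (4 + α ^ 2)) / (α * (3 + α ^ 2)) := by
  have h1 : shearCoef α 2 = α * (3 + α ^ 2) / (2 * (4 + α ^ 2)) := by
    unfold shearCoef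
    rw [show (2 : ℝ) ^ 2 = 4 by norm_num]
    field_simp
    ring
  rw [diag, Nat.cast_one, one_add_one_eq_two, h1, div_div_eq_mul_div]

/-- At large `ε` or `lam`, the boundary ratio exceeds the matching value. -/
lemma PosSol.matching_lt {α ε lam : ℝ} {z : ℕ → ℝ} (h : PosSol α ε lam z) (hα : 0 < α)
    (hε : 0 < ε) (hl : 0 ≤ lam)
    (hbig : (1 - α ^ 2) * α ^ 2 ≤ rate α ε lam 0 * rate α ε lam 1 * (2 * (1 + α ^ 2))) :
    -2 * shearCoef α 0 * z 1 < rate α ε lam 0 * z 0 := by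
  have h1 := mul_lt_mul_of_pos_left (h.diag_mul_lt 0) (rate_pos hα hε hl 0)
  refine lt_of_le_of_lt ?_ h1
  rw [← mul_assoc]
  refine mul_le_mul_of_nonneg_right ?_ (h.pos 1).le
  rw [shearCoef_zero hα, diag_zero hα, ← mul_div_assoc, div_le_div_iff₀ hα (by positivity)]
  have := mul_le_mul_of_nonneg_right hbig hα.le
  linarith

/-- At the lower bound of the critical viscosity, the boundary ratio is below the matching value. -/
lemma PosSol.lt_matching {α ε : ℝ} {z : ℕ → ℝ} (h : PosSol α ε 0 z) (hα : 0 < α)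
    (hε : 0 < ε) (hL : 4 * (α ^ 2 + 1) ^ 2 * (α ^ 2 + 4) ^ 2 * ε ^ 2
      = 32 - 3 * α ^ 6 - 17 * α ^ 4 - 16 * α ^ 2) :
    rate α ε 0 0 * z 0 < -2 * shearCoef α 0 * z 1 := by
  have hd1 := diag_pos hα hε le_rfl 1
  have h1 : z 2 < z 1 / diag α ε 0 1 := by
    rw [lt_div_iff₀ hd1, mul_comm]
    exact h.diag_mul_lt 1
  have h2 : z 0 = diag α ε 0 0 * z 1 + z 2 := by linarith [h.step 0]
  have h3 : z 0 < (diag α ε 0 0 + 1 / diag α ε 0 1) * z 1 := by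
    rw [h2, add_mul, one_div_mul_eq_div]
    linarith
  have h4 := mul_lt_mul_of_pos_left h3 (rate_pos hα hε le_rfl 0)
  refine h4.trans_eq ?_
  rw [← mul_assoc]
  congr 1
  rw [shearCoef_zero hα, diag_zero hα, diag_one hα]
  simp only [rate]
  have e1 : (2 : ℝ) ^ 2 + α ^ 2 = α ^ 2 + 4 := by ring
  rw [e1]
  field_simp
  linear_combination ε * α ^ 2 * hL

lemma exists_criticalViscosity {α L U : ℝ} (hα : 0 < α) (hL0 : 0 < L) (hLU : L < U)
    (hL : 4 * (α ^ 2 + 1) ^ 2 * (α ^ 2 + 4) ^ 2 * L ^ 2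
      = 32 - 3 * α ^ 6 - 17 * α ^ 4 - 16 * α ^ 2)
    (hU : 2 * (α ^ 2 + 1) ^ 2 * U ^ 2 = 1 - α ^ 2) :
    ∃ εs, L < εs ∧ εs < U ∧ Critical α εs 0 := by
  have hU0 : 0 < U := hL0.trans hLU
  have hlow : ∀ z, PosSol α L 0 z → rate α L 0 0 * z 0 < -2 * shearCoef α 0 * z 1 :=
    fun z hz => hz.lt_matching hα hL0 hL
  have hupp : ∀ z, PosSol α U 0 z → -2 * shearCoef α 0 * z 1 < rate α U 0 0 * z 0 :=
    fun z hz => hz.matching_lt hα hU0 le_rfl (by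
      rw [← hU]
      simp only [rate]
      apply le_of_eq
      ring)
  have : PreconnectedSpace (Set.Icc L U) := Subtype.preconnectedSpace isPreconnected_Icc
  obtain ⟨⟨x, hx1, hx2⟩, z, hz, hzb⟩ := exists_critical (X := Set.Icc L U) (ε := fun x => x)
    (lam := fun _ => 0) hα hL0 (fun x => x.2.1) (fun _ => le_rfl) continuous_subtype_val
    continuous_const (p := ⟨L, le_rfl, hLU.le⟩) (q := ⟨U, hLU.le, le_rfl⟩)
    (fun z hz => (hlow z hz).le) (fun z hz => (hupp z hz).le)
  refine ⟨x, hx1.lt_of_ne ?_, hx2.lt_of_ne ?_, z, hz, hzb⟩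
  · rintro rfl
    exact (hlow z hz).ne hzb
  · rintro rfl
    exact (hupp z hz).ne' hzb

lemma exists_critical_of_lt {α ε εs : ℝ} (hα : 0 < α) (hε : 0 < ε) (hlt : ε < εs)
    (hs : Critical α εs 0) : ∃ μ, 0 < μ ∧ Critical α ε μ := by
  obtain ⟨x, hx, hxb⟩ := hs
  have hlow : ∀ z, PosSol α ε 0 z → rate α ε 0 0 * z 0 < -2 * shearCoef α 0 * z 1 := by
    intro z hz
    have h1 := hz.compare hx hα hε le_rfl hlt.le le_rfl (by simp) (Or.inr hlt)
    rw [← mul_assoc, ← mul_assoc, hxb] at h1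
    exact lt_of_mul_lt_mul_right (by linarith) (hx.pos 1).le
  have hupp : ∀ z, PosSol α ε 1 z → -2 * shearCoef α 0 * z 1 ≤ rate α ε 1 0 * z 0 :=
    fun z hz => (hz.matching_lt hα hε zero_le_one (by
      have h0 : 1 ≤ rate α ε 1 0 := by
        simp only [rate, le_add_iff_nonneg_right]
        positivity
      have h1 : 1 ≤ rate α ε 1 1 := by
        simp only [rate, le_add_iff_nonneg_right]
        positivity
      have h2 := one_le_mul_of_one_le_of_one_le h0 h1
      nlinarith [sq_nonneg (α ^ 2), sq_nonneg α])).le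
  have : PreconnectedSpace (Set.Icc (0 : ℝ) 1) := Subtype.preconnectedSpace isPreconnected_Icc
  obtain ⟨⟨μ, h0, h1⟩, z, hz, hzb⟩ := exists_critical (X := Set.Icc (0 : ℝ) 1) (ε := fun _ => ε)
    (lam := fun x => x) hα hε (fun _ => le_rfl) (fun x => x.2.1) continuous_const
    continuous_subtype_val (p := ⟨0, le_rfl, zero_le_one⟩) (q := ⟨1, zero_le_one, le_rfl⟩)
    (fun z hz => (hlow z hz).le) hupp
  refine ⟨μ, h0.lt_of_ne ?_, z, hz, hzb⟩
  rintro rfl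
  exact (hlow z hz).ne hzb

/-- Existence and uniqueness of the critical viscosity `ε_*(α)` on the line
`k̂ = (0,−1)` for `α ∈ (0.5, 0.95)`, together with the instability/stability
description of the eigenvalues on either side of `ε_*(α)`. -/
theorem critical_viscosity_line_zero_neg_one
    (α : ℝ) (hα : 0.5 < α ∧ α < 0.95) :
    0 < 32 - 3 * α ^ 6 - 17 * α ^ 4 - 16 * α ^ 2
    ∧ Real.sqrt (32 - 3 * α ^ 6 - 17 * α ^ 4 - 16 * α ^ 2)
        / (2 * (α ^ 2 + 1) * (α ^ 2 + 4))
      < (1 / (α ^ 2 + 1)) * Real.sqrt ((1 - α ^ 2) / 2)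
    ∧ ∃! εs : ℝ, 0 < εs
        ∧ Real.sqrt (32 - 3 * α ^ 6 - 17 * α ^ 4 - 16 * α ^ 2)
            / (2 * (α ^ 2 + 1) * (α ^ 2 + 4)) < εs
        ∧ εs < (1 / (α ^ 2 + 1)) * Real.sqrt ((1 - α ^ 2) / 2)
        ∧ (∀ ε : ℝ, εs < ε →
            ∀ lam : ℂ, 0 ≤ lam.re → ¬ IsLineEig α ε (0, -1) lam)
        ∧ (IsLineEig α εs (0, -1) 0
            ∧ ∀ lam : ℂ, IsLineEig α εs (0, -1) lam → lam = 0 ∨ lam.re < 0)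
        ∧ (∀ ε : ℝ, 0 < ε → ε < εs →
            ∃ μ : ℝ, 0 < μ ∧ IsLineEig α ε (0, -1) (μ : ℂ)
              ∧ ∀ lam : ℂ, IsLineEig α ε (0, -1) lam → lam = (μ : ℂ) ∨ lam.re < 0) := by
 
  obtain ⟨hαl, hαu⟩ := hα
  have hα : 0 < α := lt_trans (by norm_num) hαl
  have hα1 : α < 1 := hαu.trans (by norm_num)
  have hα2 : α ^ 2 < 0.9025 := by nlinarith
  have hR : 0 < 32 - 3 * α ^ 6 - 17 * α ^ 4 - 16 * α ^ 2 := by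
    have h4 : α ^ 4 < 0.9025 ^ 2 := by
      calc α ^ 4 = (α ^ 2) ^ 2 := by ring
        _ < _ := by gcongr
    have h6 : α ^ 6 < 0.9025 ^ 3 := by
      calc α ^ 6 = (α ^ 2) ^ 3 := by ring
        _ < _ := by gcongr
    norm_num at h4 h6 hα2
    linarith
  have hD : 0 < (1 - α ^ 2) / 2 := by nlinarith
  set L := Real.sqrt (32 - 3 * α ^ 6 - 17 * α ^ 4 - 16 * α ^ 2)
        / (2 * (α ^ 2 + 1) * (α ^ 2 + 4)) with hLdef
  set U := (1 / (α ^ 2 + 1)) * Real.sqrt ((1 - α ^ 2) / 2) with hUdef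
  have hL0 : 0 < L := div_pos (Real.sqrt_pos.2 hR) (by positivity)
  have hU0 : 0 < U := mul_pos (by positivity) (Real.sqrt_pos.2 hD)
  have hL : 4 * (α ^ 2 + 1) ^ 2 * (α ^ 2 + 4) ^ 2 * L ^ 2
      = 32 - 3 * α ^ 6 - 17 * α ^ 4 - 16 * α ^ 2 := by
    rw [hLdef, div_pow, Real.sq_sqrt hR.le]
    field_simp
    ring
  have hU : 2 * (α ^ 2 + 1) ^ 2 * U ^ 2 = 1 - α ^ 2 := by
    rw [hUdef, mul_pow, Real.sq_sqrt hD.le]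
    field_simp
  have hLU : L < U := by
    refine lt_of_pow_lt_pow_left₀ 2 hU0.le ?_
    have hc : 0 < 4 * (α ^ 2 + 1) ^ 2 * (α ^ 2 + 4) ^ 2 := by positivity
    refine lt_of_mul_lt_mul_left ?_ hc.le
    have h4 : 0 < α ^ 4 * (α ^ 2 + 3) := by positivity
    have h5 : 4 * (α ^ 2 + 1) ^ 2 * (α ^ 2 + 4) ^ 2 * U ^ 2
        = 2 * (α ^ 2 + 4) ^ 2 * (1 - α ^ 2) := by
      linear_combination 2 * (α ^ 2 + 4) ^ 2 * hU
    rw [hL, h5]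
    nlinarith
  refine ⟨hR, hLU, ?_⟩
  obtain ⟨εs, hLs, hsU, hs⟩ := exists_criticalViscosity hα hL0 hLU hL hU
  have hs0 : 0 < εs := hL0.trans hLs
  refine ⟨εs, ⟨hs0, hLs, hsU, ?_, ⟨?_, ?_⟩, ?_⟩, ?_⟩
  · intro ε hε lam hl h
    have hc := (h.critical hα hα1 (hs0.trans hε) hl).2
    exact hs.false_of_lt hc hα hs0 le_rfl hε.le hl (by rw [zero_mul]; positivity) (Or.inr hε)
  · simpa using hs.isLineEig hα hα1 hs0 le_rfl
  · intro lam h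
    by_contra! hcon
    obtain ⟨hne, hl⟩ := hcon
    obtain ⟨hreal, hc⟩ := h.critical hα hα1 hs0 hl
    have hpos : 0 < lam.re := hl.lt_of_ne fun h0 => hne (by rw [hreal, ← h0, Complex.ofReal_zero])
    exact hs.false_of_lt hc hα hs0 le_rfl le_rfl hl (by rw [zero_mul]; positivity) (Or.inl hpos)
  · intro ε hε hlt
    obtain ⟨μ, hμ, hcμ⟩ := exists_critical_of_lt hα hε hlt hs
    refine ⟨μ, hμ, hcμ.isLineEig hα hα1 hε hμ.le, fun lam h => ?_⟩
    by_contra! hcon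
    obtain ⟨hne, hl⟩ := hcon
    obtain ⟨hreal, hc⟩ := h.critical hα hα1 hε hl
    rcases lt_trichotomy lam.re μ with h1 | h1 | h1
    · exact hc.false_of_lt hcμ hα hε hl le_rfl h1.le
        (by rw [mul_comm]; gcongr) (Or.inl h1)
    · exact hne (by rw [hreal, h1])
    · exact hcμ.false_of_lt hc hα hε hμ.le le_rfl h1.le
        (by rw [mul_comm]; gcongr) (Or.inl h1)
  · rintro ε ⟨hε, -, -, -, ⟨h0, -⟩, -⟩
    have hc : Critical α ε 0 := by simpa using (h0.critical hα hα1 hε (by simp)).2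
    rcases lt_trichotomy ε εs with h1 | h1 | h1
    · exact (hc.false_of_lt hs hα hε le_rfl h1.le le_rfl (by simp) (Or.inr h1)).elim
    · exact h1
    · exact (hs.false_of_lt hc hα hs0 le_rfl h1.le le_rfl (by simp) (Or.inr h1)).elim
end

section
/- Let α ∈ (0.5, 0.8469) and k̂ = (0,−1). Let L₀ be the bounded linear operator on ℓ²(ℤ;ℂ) defined by (L₀ω)_n = A_{n−1}ω_{n−1} − A_{n+1}ω_{n+1} with A_n = A(p, k̂+np). Then there exists λ₀ > 0 with √(α²(1−α²)/(2(α²+1)) − α⁴(α²+3)/(4(α²+1)(α²+4))) < λ₀ < √(α²(1−α²)/(2(α²+1))) such that λ₀ and −λ₀ are the only eigenvalues of L₀, and the spectrum of L₀ equals {λ₀, −λ₀} ∪ {it : t ∈ ℝ, |t| ≤ α} (the segment being continuous spectrum). -/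
/-- The Hilbert space `ℓ²(ℤ;ℂ)`. -/
abbrev BiSeq : Type := lp (fun _ : ℤ => ℂ) 2

lemma BiSeq.summable_sq (x : BiSeq) : Summable fun n => ‖x n‖ ^ 2 := by
  have h := (lp.memℓp x).summable (by norm_num)
  simpa using h

lemma BiSeq.norm_sq (x : BiSeq) : ‖x‖ ^ 2 = ∑' n, ‖x n‖ ^ 2 := by
  have h := lp.norm_rpow_eq_tsum (p := 2) (by norm_num) x
  simpa using h

lemma memlp_two_of_summable {f : ℤ → ℂ} (h : Summable fun n => ‖f n‖ ^ 2) : Memℓp f 2 := by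
  apply memℓp_gen
  simpa using h

lemma exists_weightedShift (σ : ℤ ≃ ℤ) (a : ℤ → ℂ) (C : ℝ) (hC : 0 ≤ C) (ha : ∀ n, ‖a n‖ ≤ C) :
    ∃ W : BiSeq →L[ℂ] BiSeq, (∀ x n, W x n = a n * x (σ n)) ∧ ‖W‖ ≤ C := by
  have hle : ∀ (x : BiSeq) n, ‖a n * x (σ n)‖ ^ 2 ≤ C ^ 2 * ‖x (σ n)‖ ^ 2 := by
    intro x n
    rw [norm_mul, mul_pow]
    gcongr
    exact ha n
  have hs : ∀ x : BiSeq, Summable fun n => C ^ 2 * ‖x (σ n)‖ ^ 2 := fun x =>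
    ((σ.summable_iff (f := fun n => ‖x n‖ ^ 2)).2 x.summable_sq).mul_left _
  have hm : ∀ x : BiSeq, Memℓp (fun n => a n * x (σ n)) 2 := fun x =>
    memlp_two_of_summable ((hs x).of_nonneg_of_le (fun n => by positivity) (hle x))
  let W₀ : BiSeq →ₗ[ℂ] BiSeq :=
    { toFun := fun x => ⟨fun n => a n * x (σ n), hm x⟩
      map_add' := fun x y => by
        ext n
        exact mul_add _ _ _
      map_smul' := fun c x => by
        ext n
        exact mul_left_comm _ _ _ }
  have hb : ∀ x, ‖W₀ x‖ ≤ C * ‖x‖ := by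
    intro x
    refine pow_le_pow_iff_left₀ (norm_nonneg _) (by positivity) two_ne_zero |>.1 ?_
    rw [mul_pow, BiSeq.norm_sq, BiSeq.norm_sq, ← σ.tsum_eq (fun n => ‖x n‖ ^ 2), ← tsum_mul_left]
    exact (BiSeq.summable_sq (W₀ x)).tsum_le_tsum (hle x) (hs x)
  exact ⟨W₀.mkContinuous C hb, fun x n => rfl, W₀.mkContinuous_norm_le hC hb⟩

lemma inner_weightedShift (σ : ℤ ≃ ℤ) (a b : ℤ → ℂ) (hab : ∀ n, b n = star (a (σ.symm n)))
    (V W : BiSeq →L[ℂ] BiSeq) (hV : ∀ x n, V x n = a n * x (σ n))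
    (hW : ∀ x n, W x n = b n * x (σ.symm n)) (x y : BiSeq) :
    inner ℂ (V x) y = inner ℂ x (W y) := by
  rw [lp.inner_eq_tsum, lp.inner_eq_tsum,
    ← σ.symm.tsum_eq (fun n => inner ℂ (V x n) (y n))]
  refine tsum_congr fun n => ?_
  simp only [hV, hW, hab, RCLike.inner_apply, map_mul, Equiv.apply_symm_apply,
    RCLike.star_def]
  ring

/-- A rank-one perturbation of an invertible operator is invertible as soon as it is injective. -/
lemma isUnit_add_smulRight_of_injective {E : Type*} [NormedAddCommGroup E] [NormedSpace ℂ E]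
    [CompleteSpace E] (M : E →L[ℂ] E) (hM : IsUnit M) (φ : E →L[ℂ] ℂ) (y : E)
    (hinj : ∀ x, (M + φ.smulRight y) x = 0 → x = 0) : IsUnit (M + φ.smulRight y) := by
  rw [ContinuousLinearMap.isUnit_iff_bijective] at hM ⊢
  refine ⟨(injective_iff_map_eq_zero _).2 hinj, fun z => ?_⟩
  obtain ⟨w, hw⟩ := hM.2 y
  obtain ⟨r, hr⟩ := hM.2 z
  have hφ : 1 + φ w ≠ 0 := by
    intro h
    have h0 : w = 0 := hinj w (by
      have h1 : φ w = -1 := by linear_combination h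
      simp [hw, h1])
    simp [h0] at h
  obtain ⟨c, hc⟩ : ∃ c, φ r = c * (1 + φ w) := ⟨φ r / (1 + φ w), by field_simp⟩
  refine ⟨r - c • w, ?_⟩
  simp only [add_apply, ContinuousLinearMap.smulRight_apply, map_sub, map_smul, hw, hr, hc]
  module

/-- A skew-symmetric bounded operator has purely imaginary spectrum, bounded by its norm. -/
lemma spectrum_subset_of_skew {E : Type*} [NormedAddCommGroup E] [InnerProductSpace ℂ E]
    [CompleteSpace E] [Nontrivial E] (K : E →L[ℂ] E)
    (hK : ∀ x y, inner ℂ (K x) y = -inner ℂ x (K y))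
    {lam : ℂ} (hlam : lam ∈ spectrum ℂ K) :
    lam.re = 0 ∧ |lam.im| ≤ ‖K‖ := by
  have hsa : IsSelfAdjoint (Complex.I • K) := by
    rw [ContinuousLinearMap.isSelfAdjoint_iff_isSymmetric]
    intro x y
    change inner ℂ (Complex.I • K x) y = inner ℂ x (Complex.I • K y)
    rw [inner_smul_left, inner_smul_right, hK]
    simp
  have hmem : Complex.I * lam ∈ spectrum ℂ (Complex.I • K) := by
    have := (spectrum.smul_mem_smul_iff (a := K) (s := lam)
      (r := Units.mk0 Complex.I Complex.I_ne_zero)).2 hlam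
    exact this
  have hre : lam.re = 0 := by
    have := congrArg Complex.im (hsa.mem_spectrum_eq_re hmem)
    simpa using this
  refine ⟨hre, ?_⟩
  have h := spectrum.norm_le_norm_of_mem hlam
  exact (Complex.abs_im_le_norm lam).trans h

open Filter Topology in
lemma exists_forall_ge_abs_le {w : ℕ → ℝ} (hw : Tendsto w atTop (𝓝 0)) {m₀ : ℕ} (hm : w m₀ ≠ 0) :
    ∃ m ≥ m₀, w m ≠ 0 ∧ ∀ j ≥ m, |w j| ≤ |w m| := by
  have h0 : ∀ᶠ j in atTop, |w j| < |w m₀| := by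
    have := hw.abs
    rw [abs_zero] at this
    exact this.eventually (gt_mem_nhds (abs_pos.2 hm))
  obtain ⟨J, hJ⟩ := eventually_atTop.1 h0
  obtain ⟨m, hmem, hmax⟩ := (Finset.Icc m₀ (max m₀ J)).exists_max_image (fun j => |w j|)
    ⟨m₀, by simp⟩
  have h1 : |w m₀| ≤ |w m| := hmax m₀ (by simp)
  refine ⟨m, (Finset.mem_Icc.1 hmem).1, abs_pos.1 ((abs_pos.2 hm).trans_le h1), fun j hj => ?_⟩
  rcases le_total J j with h | h
  · exact (hJ j h).le.trans h1
  · exact hmax j (Finset.mem_Icc.2 ⟨(Finset.mem_Icc.1 hmem).1.trans hj, h.trans (le_max_right _ _)⟩)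

open Filter Topology in
/-- In the oscillatory regime a three-term recurrence with monotone convergent coefficients has no
nontrivial decaying solution. -/
lemma eq_zero_of_oscillatory {b w : ℕ → ℝ} {s B : ℝ} (hb : Antitone b) (hB : 0 < B)
    (hlim : Tendsto b atTop (𝓝 B)) (hs : |s| * B < 2) (hw : Tendsto w atTop (𝓝 0))
    (hrec : ∀ k, w k + w (k + 2) = s * b k * w (k + 1)) (k : ℕ) : w k = 0 := by
  have hge : ∀ k, B ≤ b k := fun k => hb.le_of_tendsto hlim k
  have hsmall : ∀ᶠ m in atTop, |s| * (b m - B) < 1 - |s| * b m / 2 := by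
    have h1 : Tendsto (fun m => |s| * (b m - B)) atTop (𝓝 (|s| * (B - B))) :=
      (hlim.sub_const B).const_mul _
    have h2 : Tendsto (fun m => 1 - |s| * b m / 2) atTop (𝓝 (1 - |s| * B / 2)) :=
      ((hlim.const_mul _).div_const 2).const_sub 1
    exact h1.eventually_lt h2 (by linarith)
  obtain ⟨N, hN⟩ := eventually_atTop.1 hsmall
  have hzero : ∀ m₀ ≥ N, w m₀ = 0 := by
    intro m₀ hm₀
    by_contra hne
    obtain ⟨m, hmm, hm0, hmax⟩ := exists_forall_ge_abs_le hw hne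
    have hstep : ∀ j, w m ^ 2 + w (m + 1) ^ 2 - s * b m * w m * w (m + 1)
        ≤ w (m + j) ^ 2 + w (m + j + 1) ^ 2 - s * b (m + j) * w (m + j) * w (m + j + 1)
          + |s| * (b m - b (m + j)) * w m ^ 2 := by
      intro j
      induction j with
      | zero => simp
      | succ j ih =>
        have h1 : |w (m + j + 1) * w (m + j + 2)| ≤ w m ^ 2 := by
          rw [abs_mul, ← sq_abs (w m), sq]
          exact mul_le_mul (hmax _ (by omega)) (hmax _ (by omega)) (abs_nonneg _) (abs_nonneg _)
        have h2 : 0 ≤ b (m + j) - b (m + j + 1) := sub_nonneg.2 (hb (by omega))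
        have h3 : -(|s| * (b (m + j) - b (m + j + 1)) * w m ^ 2)
            ≤ s * (b (m + j) - b (m + j + 1)) * (w (m + j + 1) * w (m + j + 2)) := by
          refine (neg_le_neg ?_).trans (neg_abs_le _)
          rw [abs_mul, abs_mul, abs_of_nonneg h2]
          gcongr
        have h4 := hrec (m + j)
        have h5 : w (m + j + 2) = s * b (m + j) * w (m + j + 1) - w (m + j) := by linarith
        have h6 : w (m + j + 1) ^ 2 + w (m + j + 2) ^ 2
              - s * b (m + j + 1) * w (m + j + 1) * w (m + j + 2)
            = w (m + j) ^ 2 + w (m + j + 1) ^ 2 - s * b (m + j) * w (m + j) * w (m + j + 1)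
              + s * (b (m + j) - b (m + j + 1)) * (w (m + j + 1) * w (m + j + 2)) := by
          rw [h5]
          ring
        rw [show m + (j + 1) = m + j + 1 by ring, show m + j + 1 + 1 = m + j + 2 by ring]
        linarith
    have hE : w m ^ 2 + w (m + 1) ^ 2 - s * b m * w m * w (m + 1)
        ≤ |s| * (b m - B) * w m ^ 2 := by
      have hshift : Tendsto (fun j => m + j) atTop atTop :=
        tendsto_atTop_mono (fun j => Nat.le_add_left j m) tendsto_id
      have hshift' : Tendsto (fun j => m + j + 1) atTop atTop :=
        (tendsto_add_atTop_nat 1).comp hshift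
      have t1 := hw.comp hshift
      have t2 := hw.comp hshift'
      have t3 := hlim.comp hshift
      have t := (((t1.pow 2).add (t2.pow 2)).sub (((t3.const_mul s).mul t1).mul t2)).add
        (((t3.const_sub (b m)).const_mul |s|).mul_const (w m ^ 2))
      have := ge_of_tendsto' t hstep
      simpa using this
    have hκ := hN m (hm₀.trans hmm)
    have hpos : 0 < w m ^ 2 := by positivity
    have hlow : (1 - |s| * b m / 2) * (w m ^ 2 + w (m + 1) ^ 2)
        ≤ w m ^ 2 + w (m + 1) ^ 2 - s * b m * w m * w (m + 1) := by
      have h1 : s * b m * w m * w (m + 1) ≤ |s| * b m * (|w m| * |w (m + 1)|) := by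
        refine (le_abs_self _).trans (le_of_eq ?_)
        rw [abs_mul, abs_mul, abs_mul, abs_of_pos (hB.trans_le (hge m))]
        ring
      have h2 : |w m| * |w (m + 1)| ≤ (w m ^ 2 + w (m + 1) ^ 2) / 2 := by
        rw [← sq_abs (w m), ← sq_abs (w (m + 1))]
        nlinarith [sq_nonneg (|w m| - |w (m + 1)|)]
      have h3 := mul_le_mul_of_nonneg_left h2
        (mul_nonneg (abs_nonneg s) (hB.trans_le (hge m)).le)
      linarith
    have h0 : 0 ≤ |s| * (b m - B) := mul_nonneg (abs_nonneg _) (sub_nonneg.2 (hge m))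
    nlinarith [mul_lt_mul_of_pos_right hκ hpos,
      mul_nonneg (h0.trans hκ.le) (sq_nonneg (w (m + 1)))]
  have hdesc : ∀ j, ∀ k, N ≤ k + j → w k = 0 := by
    intro j
    induction j with
    | zero => exact fun k hk => hzero k hk
    | succ j ih =>
      intro k hk
      have h := hrec k
      rw [ih (k + 1) (by omega), ih (k + 2) (by omega)] at h
      linarith
  exact hdesc N k (by omega)

open Filter Topology in
/-- In the hyperbolic regime, decaying solutions do not change sign at the boundary. -/
lemma nonpos_of_hyperbolic {c w : ℕ → ℝ} (hc : ∀ k, 2 ≤ c k) (hw : Tendsto w atTop (𝓝 0))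
    (hrec : ∀ k, w k + w (k + 2) = c k * w (k + 1)) (h0 : w 0 ≤ 0) : w 1 ≤ 0 := by
  by_contra! h1
  have hmono : ∀ k, w k ≤ w (k + 1) ∧ w 1 ≤ w (k + 1) := by
    intro k
    induction k with
    | zero => exact ⟨h0.trans h1.le, le_rfl⟩
    | succ k ih =>
      have h2 := hrec k
      have h3 := mul_le_mul_of_nonneg_right (hc k) (h1.le.trans ih.2)
      have h4 : w (k + 1) ≤ w (k + 2) := by linarith
      exact ⟨h4, ih.2.trans h4⟩
  have := ge_of_tendsto' (hw.comp (tendsto_add_atTop_nat 1)) fun k => (hmono k).2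
  linarith

/-- Backward approximants of the continued fraction `1 / (l / b n + 1 / (l / b (n + 1) + ⋯))`. -/
noncomputable def contFrac (b : ℕ → ℝ) (l : ℝ) : ℕ → ℕ → ℝ
  | 0, _ => 0
  | k + 1, n => 1 / (l / b n + contFrac b l k (n + 1))

lemma contFrac_nonneg {b : ℕ → ℝ} (hb : ∀ k, 0 < b k) {l : ℝ} (hl : 0 < l) (k n : ℕ) :
    0 ≤ contFrac b l k n := by
  induction k generalizing n with
  | zero => exact le_rfl
  | succ k ih =>
    have := ih (n + 1)
    have := hb n
    simp only [contFrac]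
    positivity

lemma contFrac_le {b : ℕ → ℝ} (hb : ∀ k, 0 < b k) {l : ℝ} (hl : 0 < l) (k n : ℕ) :
    contFrac b l k n ≤ b n / l := by
  have hbn := hb n
  cases k with
  | zero => exact (div_pos hbn hl).le
  | succ k =>
    have := contFrac_nonneg hb hl k (n + 1)
    rw [contFrac, ← one_div_div l (b n)]
    apply one_div_le_one_div_of_le (by positivity)
    linarith

lemma continuousOn_contFrac {b : ℕ → ℝ} (hb : ∀ k, 0 < b k) (k n : ℕ) :
    ContinuousOn (fun l => contFrac b l k n) (Set.Ioi 0) := by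
  induction k generalizing n with
  | zero => exact continuousOn_const
  | succ k ih =>
    simp only [contFrac]
    refine continuousOn_const.div ((continuousOn_id.div_const _).add (ih (n + 1))) ?_
    intro l hl
    have := contFrac_nonneg hb hl k (n + 1)
    have := div_pos hl (hb n)
    positivity

/-- The solution of `u (k + 2) = u k - (l / b k) u (k + 1)` with `u 0 = 1`, `u 1 = l / β`. -/
noncomputable def shoot (b : ℕ → ℝ) (β l : ℝ) : ℕ → ℝ
  | 0 => 1
  | 1 => l / β
  | k + 2 => shoot b β l k - l / b k * shoot b β l (k + 1)

lemma continuous_shoot (b : ℕ → ℝ) (β : ℝ) : ∀ k, Continuous fun l => shoot b β l k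
  | 0 => continuous_const
  | 1 => continuous_id.div_const β
  | k + 2 => by
    simp only [shoot]
    exact (continuous_shoot b β k).sub
      ((continuous_id.div_const _).mul (continuous_shoot b β (k + 1)))

lemma nonneg_of_contFrac {b u : ℕ → ℝ} (hb : ∀ k, 0 < b k) {l : ℝ} (hl : 0 < l)
    (hrec : ∀ k, u (k + 2) = u k - l / b k * u (k + 1)) (k : ℕ) :
    ∀ j, 0 ≤ u j → u (j + 1) = contFrac b l k j * u j → ∀ i ≤ k, 0 ≤ u (j + i) := by
  induction k with
  | zero =>
    intro j hj _ i hi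
    simpa [Nat.le_zero.1 hi] using hj
  | succ k ih =>
    intro j hj hu i hi
    have hr := contFrac_nonneg hb hl k (j + 1)
    have hpos : 0 < l / b j + contFrac b l k (j + 1) := by
      have := div_pos hl (hb j)
      positivity
    have h1 : 0 ≤ u (j + 1) := by
      rw [hu]
      exact mul_nonneg (contFrac_nonneg hb hl _ _) hj
    have h2 : u (j + 2) = contFrac b l k (j + 1) * u (j + 1) := by
      have h3 : (l / b j + contFrac b l k (j + 1)) * u (j + 1) = u j := by
        rw [hu, contFrac]
        field_simp
      rw [hrec]
      linarith
    rcases i with _ | i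
    · simpa using hj
    · have := ih (j + 1) h1 h2 i (by omega)
      rwa [show j + 1 + i = j + (i + 1) by ring] at this

lemma pos_of_nonneg {b u : ℕ → ℝ} (hb : ∀ k, 0 < b k) {l : ℝ} (hl : 0 < l)
    (hrec : ∀ k, u (k + 2) = u k - l / b k * u (k + 1)) (hnn : ∀ k, 0 ≤ u k) (h0 : 0 < u 0) (k : ℕ) :
    0 < u k := by
  induction k with
  | zero => exact h0
  | succ k ih =>
    by_contra hneg
    have h1 : u (k + 1) = 0 := le_antisymm (not_lt.1 hneg) (hnn _)
    have h2 := hrec k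
    have h3 := hrec (k + 1)
    have h4 := hnn (k + 3)
    have h5 : 0 < l / b (k + 1) * u (k + 2) := by
      rw [h2, h1]
      have := div_pos hl (hb (k + 1))
      simp only [mul_zero, sub_zero]
      positivity
    simp only [add_assoc, Nat.reduceAdd] at h3
    linarith

lemma exists_pos_solution {b : ℕ → ℝ} (hb : ∀ k, 0 < b k) {β : ℝ} (hβ : b 1 < β) :
    ∃ l : ℝ, 0 < l ∧ (β - b 1) * b 0 < l ^ 2 ∧ l ^ 2 < β * b 0 ∧ ∃ u : ℕ → ℝ,
      (∀ k, 0 < u k) ∧ u 1 * β = l * u 0 ∧ ∀ k, u (k + 2) = u k - l / b k * u (k + 1) := by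
  have hb0 := hb 0
  have hb1 := hb 1
  have hβ0 : 0 < β := hb1.trans hβ
  set lo := √((β - b 1) * b 0)
  set hi := √(β * b 0)
  have hlo_sq : lo ^ 2 = (β - b 1) * b 0 := Real.sq_sqrt (mul_nonneg (sub_pos.2 hβ).le hb0.le)
  have hhi_sq : hi ^ 2 = β * b 0 := Real.sq_sqrt (by positivity)
  have hlo0 : 0 < lo := Real.sqrt_pos.2 (mul_pos (sub_pos.2 hβ) hb0)
  have hhi0 : 0 < hi := Real.sqrt_pos.2 (by positivity)
  have hlohi : lo ≤ hi := Real.sqrt_le_sqrt (by nlinarith)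
  let S : ℕ → Set ℝ := fun N => Set.Icc lo hi ∩ {l | ∀ k ≤ N, 0 ≤ shoot b β l k}
  have hclosed : ∀ N, IsClosed (S N) := by
    intro N
    refine isClosed_Icc.inter ?_
    simp only [Set.ofPred_forall]
    exact isClosed_iInter fun k => isClosed_iInter fun _ =>
      isClosed_le continuous_const (continuous_shoot b β k)
  have hne : ∀ N, (S N).Nonempty := by
    intro N
    have hcont : ContinuousOn (fun l => l / β * (l / b 0 + contFrac b l N 1)) (Set.Icc lo hi) :=
      (continuousOn_id.div_const β).mul ((continuousOn_id.div_const _).add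
        ((continuousOn_contFrac hb N 1).mono fun l hl => hlo0.trans_le hl.1))
    have hmem : (1 : ℝ) ∈ (fun l => l / β * (l / b 0 + contFrac b l N 1)) '' Set.Icc lo hi := by
      refine intermediate_value_Icc hlohi hcont ⟨?_, ?_⟩
      · have h := contFrac_le hb hlo0 N 1
        calc lo / β * (lo / b 0 + contFrac b lo N 1) ≤ lo / β * (lo / b 0 + b 1 / lo) := by gcongr
          _ = (lo ^ 2 + b 0 * b 1) / (β * b 0) := by field_simp
          _ = 1 := by
            rw [hlo_sq]
            field_simp
            ring
          _ ≤ 1 := le_rfl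
      · have h := contFrac_nonneg hb hhi0 N 1
        calc (1 : ℝ) = hi ^ 2 / (β * b 0) := by
              rw [hhi_sq]
              field_simp
          _ = hi / β * (hi / b 0 + 0) := by field_simp; ring
          _ ≤ hi / β * (hi / b 0 + contFrac b hi N 1) := by gcongr
    obtain ⟨l, hl, hl1⟩ := hmem
    have hl0 : 0 < l := hlo0.trans_le hl.1
    refine ⟨l, hl, fun k hk => ?_⟩
    have hr := contFrac_nonneg hb hl0 N 1
    have hpos : 0 < l / b 0 + contFrac b l N 1 := by
      have := div_pos hl0 hb0
      positivity
    have := nonneg_of_contFrac hb hl0 (u := shoot b β l) (fun k => rfl) (N + 1) 0 zero_le_one (by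
      simp only [shoot, contFrac, mul_one, zero_add]
      rw [eq_div_iff hpos.ne']
      exact hl1) k (by omega)
    simpa using this
  obtain ⟨l, hl⟩ := IsCompact.nonempty_iInter_of_sequence_nonempty_isCompact_isClosed S
    (fun N l hl => ⟨hl.1, fun k hk => hl.2 k (by omega)⟩) hne
    (isCompact_Icc.of_isClosed_subset (hclosed 0) Set.inter_subset_left) hclosed
  rw [Set.mem_iInter] at hl
  have hl0 : 0 < l := hlo0.trans_le (hl 0).1.1
  have hpos := pos_of_nonneg hb hl0 (u := shoot b β l) (fun k => rfl)
    (fun k => (hl k).2 k le_rfl) zero_lt_one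
  have h2 := hpos 2
  have h3 := hpos 3
  simp only [shoot] at h2 h3
  have e2 : 1 - l / b 0 * (l / β) = (β * b 0 - l ^ 2) / (β * b 0) := by field_simp
  have e3 : l / β - l / b 1 * (1 - l / b 0 * (l / β))
      = l * (l ^ 2 - (β - b 1) * b 0) / (β * b 0 * b 1) := by
    field_simp
    ring
  refine ⟨l, hl0, ?_, ?_, shoot b β l, hpos, ?_, fun k => rfl⟩
  · rw [e3] at h3
    have := (div_pos_iff_of_pos_right (by positivity)).1 h3
    have := pos_of_mul_pos_right this hl0.le
    linarith
  · rw [e2] at h2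
    have := (div_pos_iff_of_pos_right (by positivity)).1 h2
    linarith
  · simp only [shoot]
    field_simp

/-- A positive solution of the recurrence is automatically square summable. -/
lemma summable_of_pos_solution {b u : ℕ → ℝ} (hb : ∀ k, 0 < b k) {l : ℝ} (hl : 0 < l)
    (hrec : ∀ k, u (k + 2) = u k - l / b k * u (k + 1)) (hpos : ∀ k, 0 < u k) :
    Summable fun k => u (k + 1) ^ 2 / b k := by
  have hsum : ∀ n, l * ∑ k ∈ Finset.range n, u (k + 1) ^ 2 / b k = u 0 * u 1 - u n * u (n + 1) := by
    intro n
    induction n with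
    | zero => simp
    | succ n ih =>
      rw [Finset.sum_range_succ, mul_add, ih, hrec n]
      ring
  refine summable_of_sum_range_le (c := u 0 * u 1 / l)
    (fun k => div_nonneg (sq_nonneg _) (hb k).le) fun n => ?_
  rw [le_div_iff₀' hl, hsum]
  have := mul_pos (hpos n) (hpos (n + 1))
  linarith

/-- The coefficients `A_n` along the line through `(0,-1)`. -/
noncomputable def lineCoef (α : ℝ) (n : ℤ) : ℝ := α / 2 * (1 - 1 / ((n : ℝ) ^ 2 + α ^ 2))

lemma coefA_eq_lineCoef (α : ℝ) (n : ℤ) : coefA α (1, 0) (n, -1) = lineCoef α n := by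
  simp only [coefA, lineCoef]
  push_cast
  ring

lemma lineCoef_neg (α : ℝ) (n : ℤ) : lineCoef α (-n) = lineCoef α n := by
  simp [lineCoef]

lemma lineCoef_zero_neg {α : ℝ} (h0 : 0 < α) (h1 : α < 1) : lineCoef α 0 < 0 := by
  have : 1 < 1 / α ^ 2 := by
    rw [lt_div_iff₀ (by positivity)]
    nlinarith
  simp only [lineCoef, Int.cast_zero]
  norm_num
  apply mul_neg_of_pos_of_neg (by positivity)
  rw [one_div] at this
  linarith

lemma lineCoef_pos {α : ℝ} (h0 : 0 < α) {n : ℤ} (hn : n ≠ 0) : 0 < lineCoef α n := by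
  have h2 : (1 : ℝ) ≤ (n : ℝ) ^ 2 := by
    have := Int.one_le_abs hn
    have h3 : (1 : ℝ) ≤ |(n : ℝ)| := by exact_mod_cast this
    rw [← sq_abs]
    nlinarith
  refine mul_pos (by positivity) (sub_pos.2 ?_)
  rw [div_lt_one (by positivity)]
  nlinarith [sq_pos_of_pos h0]

lemma lineCoef_ne_zero {α : ℝ} (h0 : 0 < α) (h1 : α < 1) (n : ℤ) : lineCoef α n ≠ 0 := by
  rcases eq_or_ne n 0 with rfl | hn
  · exact (lineCoef_zero_neg h0 h1).ne
  · exact (lineCoef_pos h0 hn).ne'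

lemma lineCoef_le {α : ℝ} (h0 : 0 < α) (n : ℤ) : lineCoef α n ≤ α / 2 := by
  have : 0 ≤ 1 / ((n : ℝ) ^ 2 + α ^ 2) := by positivity
  simp only [lineCoef]
  nlinarith

lemma exists_abs_lineCoef_le {α : ℝ} (h0 : 0 < α) : ∃ C, 0 ≤ C ∧ ∀ n, |lineCoef α n| ≤ C := by
  refine ⟨max (α / 2) |lineCoef α 0|, le_max_of_le_right (abs_nonneg _), fun n => ?_⟩
  rcases eq_or_ne n 0 with rfl | hn
  · exact le_max_right _ _
  · rw [abs_of_pos (lineCoef_pos h0 hn)]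
    exact (lineCoef_le h0 n).trans (le_max_left _ _)

lemma monotone_lineCoef {α : ℝ} (h0 : 0 < α) :
    Monotone fun k : ℕ => lineCoef α ((k : ℤ) + 1) := by
  intro i j hij
  have : (i : ℝ) ≤ j := by exact_mod_cast hij
  simp only [lineCoef]
  push_cast
  gcongr

lemma antitone_inv_lineCoef {α : ℝ} (h0 : 0 < α) :
    Antitone fun k : ℕ => 1 / lineCoef α ((k : ℤ) + 1) := fun i _ hij =>
  one_div_le_one_div_of_le (lineCoef_pos h0 (by omega)) (monotone_lineCoef h0 hij)

open Filter Topology in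
lemma tendsto_inv_lineCoef {α : ℝ} (h0 : 0 < α) :
    Tendsto (fun k : ℕ => 1 / lineCoef α ((k : ℤ) + 1)) atTop (𝓝 (2 / α)) := by
  have h1 : Tendsto (fun k : ℕ => ((k : ℝ) + 1) ^ 2 + α ^ 2) atTop atTop :=
    tendsto_atTop_add_const_right _ _ ((tendsto_pow_atTop two_ne_zero).comp
      (tendsto_atTop_add_const_right _ _ tendsto_natCast_atTop_atTop))
  have h2 : Tendsto (fun k : ℕ => lineCoef α ((k : ℤ) + 1)) atTop (𝓝 (α / 2 * (1 - 0))) := by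
    simp only [lineCoef]
    push_cast
    exact ((tendsto_const_nhds.div_atTop h1).const_sub 1).const_mul _
  have h3 := (tendsto_const_nhds (x := (1 : ℝ))).div h2 (by simp; positivity)
  rwa [sub_zero, mul_one, one_div_div] at h3

lemma rotate_recurrence {a : ℤ → ℝ} {x : ℤ → ℂ} {s : ℝ} {n : ℤ} (ha : a n ≠ 0)
    (h : (a (n - 1) : ℂ) * x (n - 1) - a (n + 1) * x (n + 1) = s * Complex.I * x n) :
    Complex.I ^ (n - 1) * (a (n - 1) * x (n - 1)) + Complex.I ^ (n + 1) * (a (n + 1) * x (n + 1))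
      = ((s * (1 / a n) : ℝ) : ℂ) * (Complex.I ^ n * (a n * x n)) := by
  have ha' : (a n : ℂ) ≠ 0 := by exact_mod_cast ha
  rw [zpow_sub_one₀ Complex.I_ne_zero, zpow_add_one₀ Complex.I_ne_zero, Complex.inv_I]
  push_cast
  field_simp
  linear_combination -Complex.I * h - s * x n * Complex.I_sq

section Decay

open Filter Topology

lemma tendsto_rotate {a : ℤ → ℝ} {C : ℝ} (ha : ∀ n, |a n| ≤ C) (x : BiSeq) :
    Tendsto (fun n : ℤ => Complex.I ^ n * (a n * x n)) cofinite (𝓝 0) := by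
  have h1 : Tendsto (fun n => ‖x n‖) cofinite (𝓝 0) := by
    have := (x.summable_sq.tendsto_cofinite_zero).sqrt
    simpa using this
  refine squeeze_zero_norm (a := fun n => C * ‖x n‖) (fun n => ?_) (by simpa using h1.const_mul C)
  simp only [norm_mul, norm_zpow, Complex.norm_I, one_zpow, one_mul, Complex.norm_real,
    Real.norm_eq_abs]
  gcongr
  exact ha n

lemma eq_zero_nat_of_oscillatory {α : ℝ} (h0 : 0 < α) {s : ℝ} (hs : |s| < α) {v : ℤ → ℂ}
    (hv : Tendsto v cofinite (𝓝 0))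
    (hrec : ∀ n ≠ 0, v (n - 1) + v (n + 1) = ((s * (1 / lineCoef α n) : ℝ) : ℂ) * v n) (k : ℕ) :
    v k = 0 := by
  have hlim : Tendsto (fun k : ℕ => v k) atTop (𝓝 0) := by
    rw [← Nat.cofinite_eq_atTop]
    exact hv.comp Nat.cast_injective.tendsto_cofinite
  have hrec' : ∀ k : ℕ, v k + v ((k + 2 : ℕ) : ℤ)
      = ((s * (1 / lineCoef α ((k : ℤ) + 1)) : ℝ) : ℂ) * v ((k + 1 : ℕ) : ℤ) := by
    intro k
    have := hrec ((k : ℤ) + 1) (by omega)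
    rw [show (k : ℤ) + 1 - 1 = k by ring, show (k : ℤ) + 1 + 1 = ((k + 2 : ℕ) : ℤ) by push_cast; ring]
      at this
    exact_mod_cast this
  have hs' : |s| * (2 / α) < 2 := by
    rw [mul_div_assoc', div_lt_iff₀ h0]
    linarith
  apply Complex.ext
  · refine eq_zero_of_oscillatory (s := s) (antitone_inv_lineCoef h0) (by positivity)
      (tendsto_inv_lineCoef h0) hs' (w := fun k : ℕ => (v k).re)
      ((Complex.continuous_re.tendsto 0).comp hlim) (fun k => ?_) k
    simpa only [Complex.add_re, Complex.re_ofReal_mul] using congrArg Complex.re (hrec' k)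
  · refine eq_zero_of_oscillatory (s := s) (antitone_inv_lineCoef h0) (by positivity)
      (tendsto_inv_lineCoef h0) hs' (w := fun k : ℕ => (v k).im)
      ((Complex.continuous_im.tendsto 0).comp hlim) (fun k => ?_) k
    simpa only [Complex.add_im, Complex.im_ofReal_mul] using congrArg Complex.im (hrec' k)

lemma eq_zero_of_oscillatory_int {α : ℝ} (h0 : 0 < α) {s : ℝ} (hs : |s| < α) {v : ℤ → ℂ}
    (hv : Tendsto v cofinite (𝓝 0))
    (hrec : ∀ n ≠ 0, v (n - 1) + v (n + 1) = ((s * (1 / lineCoef α n) : ℝ) : ℂ) * v n) (n : ℤ) :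
    v n = 0 := by
  obtain ⟨k, rfl | rfl⟩ := n.eq_nat_or_neg
  · exact eq_zero_nat_of_oscillatory h0 hs hv hrec k
  · refine eq_zero_nat_of_oscillatory h0 hs (v := fun n => v (-n))
      (hv.comp neg_injective.tendsto_cofinite) (fun n hn => ?_) k
    have := hrec (-n) (neg_ne_zero.2 hn)
    rw [lineCoef_neg] at this
    rw [← this, add_comm]
    congr 2 <;> ring

lemma neighbor_nonpos_of_hyperbolic {α : ℝ} (h0 : 0 < α) {s : ℝ} (hs : α ≤ s) {v : ℤ → ℝ}
    (hv : Tendsto v cofinite (𝓝 0))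
    (hrec : ∀ n, v (n - 1) + v (n + 1) = s * (1 / lineCoef α n) * v n) (hv0 : v 0 ≤ 0) :
    v 1 ≤ 0 := by
  have hlim : Tendsto (fun k : ℕ => v k) atTop (𝓝 0) := by
    rw [← Nat.cofinite_eq_atTop]
    exact hv.comp Nat.cast_injective.tendsto_cofinite
  have := nonpos_of_hyperbolic (w := fun k : ℕ => v k)
    (c := fun k => s * (1 / lineCoef α ((k : ℤ) + 1))) (fun k => ?_) hlim (fun k => ?_)
    (by simpa using hv0)
  · simpa using this
  · have h1 := lineCoef_pos h0 (n := (k : ℤ) + 1) (by omega)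
    have h2 := lineCoef_le h0 ((k : ℤ) + 1)
    rw [mul_one_div, le_div_iff₀ h1]
    linarith
  · have := hrec ((k : ℤ) + 1)
    rw [show (k : ℤ) + 1 - 1 = k by ring, show (k : ℤ) + 1 + 1 = k + 2 by ring] at this
    exact_mod_cast this

lemma zero_nonneg_of_hyperbolic {α : ℝ} (h0 : 0 < α) (h1 : α < 1) {s : ℝ} (hs : α ≤ s) {v : ℤ → ℝ}
    (hv : Tendsto v cofinite (𝓝 0))
    (hrec : ∀ n, v (n - 1) + v (n + 1) = s * (1 / lineCoef α n) * v n) : 0 ≤ v 0 := by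
  by_contra! h
  have hp := neighbor_nonpos_of_hyperbolic h0 hs hv hrec h.le
  have hm := neighbor_nonpos_of_hyperbolic h0 hs (v := fun n => v (-n))
    (hv.comp neg_injective.tendsto_cofinite) (fun n => by
      have := hrec (-n)
      rw [lineCoef_neg] at this
      rw [← this, add_comm]
      congr 2 <;> ring) (by simpa using h.le)
  have h2 := hrec 0
  have h3 : s * (1 / lineCoef α 0) < 0 :=
    mul_neg_of_pos_of_neg (h0.trans_le hs) (one_div_neg.2 (lineCoef_zero_neg h0 h1))
  have h4 := mul_pos_of_neg_of_neg h3 h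
  norm_num at h2 hm h4
  linarith

lemma eq_zero_of_recurrence {c v : ℤ → ℝ} (hrec : ∀ n, v (n - 1) + v (n + 1) = c n * v n)
    (h0 : v 0 = 0) (h1 : v 1 = 0) (n : ℤ) : v n = 0 := by
  have h : ∀ n : ℤ, v n = 0 ∧ v (n + 1) = 0 := by
    intro n
    induction n with
    | zero => exact ⟨h0, by simpa using h1⟩
    | succ k ih =>
      have := hrec ((k : ℤ) + 1)
      rw [add_sub_cancel_right, ih.1, ih.2] at this
      exact ⟨ih.2, by linarith⟩
    | pred k ih =>
      have := hrec (-(k : ℤ))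
      rw [ih.1, ih.2] at this
      exact ⟨by linarith, by simpa using ih.1⟩
  exact (h n).1

lemma eq_zero_of_hyperbolic_of_pos {α : ℝ} (h0 : 0 < α) (h1 : α < 1) {s : ℝ} (hs : α ≤ s)
    {v : ℤ → ℝ} (hv : Tendsto v cofinite (𝓝 0))
    (hrec : ∀ n, v (n - 1) + v (n + 1) = s * (1 / lineCoef α n) * v n) (n : ℤ) : v n = 0 := by
  have hv' : Tendsto (fun n => -v n) cofinite (𝓝 0) := by simpa using hv.neg
  have hrec' : ∀ n, -v (n - 1) + -v (n + 1) = s * (1 / lineCoef α n) * -v n := fun n => by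
    linarith [hrec n]
  have h2 : v 0 = 0 := le_antisymm
    (by simpa using zero_nonneg_of_hyperbolic h0 h1 hs hv' hrec')
    (zero_nonneg_of_hyperbolic h0 h1 hs hv hrec)
  refine eq_zero_of_recurrence hrec h2 (le_antisymm ?_ ?_) n
  · exact neighbor_nonpos_of_hyperbolic h0 hs hv hrec h2.le
  · simpa using neighbor_nonpos_of_hyperbolic h0 hs hv' hrec' (by simp [h2])

lemma eq_zero_of_hyperbolic {α : ℝ} (h0 : 0 < α) (h1 : α < 1) {s : ℝ} (hs : α ≤ |s|)
    {v : ℤ → ℝ} (hv : Tendsto v cofinite (𝓝 0))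
    (hrec : ∀ n, v (n - 1) + v (n + 1) = s * (1 / lineCoef α n) * v n) (n : ℤ) : v n = 0 := by
  rcases le_total 0 s with hs0 | hs0
  · exact eq_zero_of_hyperbolic_of_pos h0 h1 (by rwa [abs_of_nonneg hs0] at hs) hv hrec n
  · rw [abs_of_nonpos hs0] at hs
    have := eq_zero_of_hyperbolic_of_pos h0 h1 hs (v := fun n => (-1) ^ n * v n) ?_ (fun n => ?_) n
    · exact (mul_eq_zero.1 this).resolve_left (zpow_ne_zero n (by norm_num))
    · rw [tendsto_zero_iff_norm_tendsto_zero] at hv ⊢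
      simpa using hv
    · rw [zpow_sub_one₀ (by norm_num), zpow_add_one₀ (by norm_num)]
      norm_num
      linear_combination -(-1) ^ n * hrec n

end Decay

lemma inner_shift_skew (S T T' : BiSeq →L[ℂ] BiSeq) (hS : S = T - T')
    (hT : ∀ x n, T x n = x (n - 1)) (hT' : ∀ x n, T' x n = x (n + 1)) (x y : BiSeq) :
    inner ℂ (S x) y = -inner ℂ x (S y) := by
  have h := inner_weightedShift (Equiv.subRight (1 : ℤ)) (fun _ => 1) (fun _ => 1) (by simp) T T'
    (fun x n => by simpa using hT x n) (fun x n => by simpa using hT' x n)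
  have h' : inner ℂ (T' x) y = inner ℂ x (T y) := by
    rw [← inner_conj_symm, ← h, inner_conj_symm]
  rw [hS, sub_apply, sub_apply, inner_sub_left, inner_sub_right, h, h']
  ring

/-- The difference of the right and left shifts on `ℓ²(ℤ;ℂ)`. -/
lemma exists_skewShift : ∃ S : BiSeq →L[ℂ] BiSeq, (∀ x n, S x n = x (n - 1) - x (n + 1)) ∧ ‖S‖ ≤ 2 ∧
    ∀ x y, inner ℂ (S x) y = -inner ℂ x (S y) := by
  obtain ⟨T, hT, hTn⟩ := exists_weightedShift (Equiv.subRight (1 : ℤ)) (fun _ => 1) 1 zero_le_one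
    (by simp)
  obtain ⟨T', hT', hTn'⟩ := exists_weightedShift (Equiv.addRight (1 : ℤ)) (fun _ => 1) 1 zero_le_one
    (by simp)
  simp only [one_mul, Equiv.subRight_apply, Equiv.coe_addRight] at hT hT'
  refine ⟨T - T', fun x n => ?_, ?_, inner_shift_skew _ T T' rfl hT hT'⟩
  · rw [← hT, ← hT']
    rfl
  · exact (norm_sub_le _ _).trans (by linarith)

/-- The bounded diagonal operator with real entries. -/
lemma exists_diagonal (a : ℤ → ℝ) (C : ℝ) (hC : 0 ≤ C) (ha : ∀ n, |a n| ≤ C) :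
    ∃ D : BiSeq →L[ℂ] BiSeq, (∀ x n, D x n = a n * x n) ∧ ‖D‖ ≤ C ∧
      ∀ x y, inner ℂ (D x) y = inner ℂ x (D y) := by
  obtain ⟨D, hD, hDn⟩ := exists_weightedShift (Equiv.refl ℤ) (fun n => (a n : ℂ)) C hC
    (by simpa using ha)
  exact ⟨D, hD, hDn, inner_weightedShift (Equiv.refl ℤ) (fun n => (a n : ℂ)) (fun n => (a n : ℂ))
    (by simp) D D hD hD⟩

lemma BiSeq.ext {x y : BiSeq} (h : ∀ n, x n = y n) : x = y := lp.ext (funext h)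

/-- If `A` is a diagonal form with one negative entry, an isotropic vector vanishing at that entry
is zero. -/
lemma eq_zero_of_isotropic {a : ℤ → ℝ} (ha : ∀ n ≠ 0, 0 < a n) {A : BiSeq →L[ℂ] BiSeq}
    (hA : ∀ x n, A x n = a n * x n) {z : BiSeq} (hz : z 0 = 0) (hiso : inner ℂ (A z) z = 0) :
    z = 0 := by
  have h1 := lp.hasSum_inner (𝕜 := ℂ) (A z) z
  rw [hiso] at h1
  have h2 : HasSum (fun n => a n * ‖z n‖ ^ 2) 0 := by
    have h3 : (fun n => a n * ‖z n‖ ^ 2) = fun n => (inner ℂ (A z n) (z n)).re := by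
      funext n
      rw [hA, RCLike.inner_apply, map_mul, Complex.conj_ofReal, mul_left_comm, Complex.mul_conj,
        Complex.normSq_eq_norm_sq]
      norm_cast
    rw [h3]
    exact Complex.hasSum_re h1
  have hnn : ∀ n, 0 ≤ a n * ‖z n‖ ^ 2 := by
    intro n
    rcases eq_or_ne n 0 with rfl | hn
    · simp [hz]
    · have := ha n hn
      positivity
  have h3 := (hasSum_zero_iff_of_nonneg hnn).1 h2
  refine BiSeq.ext fun n => ?_
  rcases eq_or_ne n 0 with rfl | hn
  · exact hz
  · have h4 := congrFun h3 n
    simpa [(ha n hn).ne'] using h4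

/-- Two eigenvalues of `S A` in the same open half plane coincide when `S` is skew and the form `A`
has a single negative direction. -/
lemma eigenvalue_unique {a : ℤ → ℝ} (ha : ∀ n ≠ 0, 0 < a n) {A S : BiSeq →L[ℂ] BiSeq}
    (hA : ∀ x n, A x n = a n * x n) (hAs : ∀ x y, inner ℂ (A x) y = inner ℂ x (A y))
    (hS : ∀ x y, inner ℂ (S x) y = -inner ℂ x (S y)) {lam mu : ℂ} (hre : 0 < lam.re * mu.re)
    {x y : BiSeq} (hx : x ≠ 0) (hy : y ≠ 0) (hxe : S (A x) = lam • x) (hye : S (A y) = mu • y) :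
    lam = mu := by
  have key : ∀ {p q : ℂ} {z w : BiSeq}, S (A z) = p • z → S (A w) = q • w → p.re + q.re ≠ 0 →
      inner ℂ (A z) w = 0 := by
    intro p q z w hz hw hpq
    have h1 : inner ℂ (A z) (S (A w)) = q * inner ℂ (A z) w := by rw [hw, inner_smul_right]
    have h2 : inner ℂ (S (A z)) (A w) = starRingEnd ℂ p * inner ℂ (A z) w := by
      rw [hz, inner_smul_left, hAs]
    rw [hS, h1] at h2
    have h3 : (starRingEnd ℂ p + q) * inner ℂ (A z) w = 0 := by linear_combination -h2
    refine (mul_eq_zero.1 h3).resolve_left fun h => hpq ?_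
    simpa using congrArg Complex.re h
  have hl : lam.re ≠ 0 := fun h => by simp [h] at hre
  have hm : mu.re ≠ 0 := fun h => by simp [h] at hre
  have hlm : lam.re + mu.re ≠ 0 := fun h => by
    rw [eq_neg_of_add_eq_zero_left h] at hre
    nlinarith [sq_nonneg mu.re]
  have hxx := key hxe hxe (by simpa [← two_mul] using hl)
  have hyy := key hye hye (by simpa [← two_mul] using hm)
  have hxy := key hxe hye hlm
  have hyx := key hye hxe (by rwa [add_comm])
  have hx0 : x 0 ≠ 0 := fun h => hx (eq_zero_of_isotropic ha hA h hxx)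
  have hz : y 0 • x - x 0 • y = 0 := by
    refine eq_zero_of_isotropic ha hA ?_ ?_
    · change y 0 * x 0 - x 0 * y 0 = 0
      ring
    · rw [map_sub, map_smul, map_smul, inner_sub_left, inner_sub_right, inner_sub_right]
      simp only [inner_smul_left, inner_smul_right, hxx, hyy, hxy, hyx, mul_zero, sub_zero]
  have hz' : y 0 • x = x 0 • y := sub_eq_zero.1 hz
  have h1 := congrArg (fun z => S (A z)) hz'
  simp only [map_smul, hxe, hye] at h1
  rw [smul_comm, hz', smul_smul, smul_comm (x 0), smul_smul] at h1
  rw [← sub_eq_zero, ← sub_smul, smul_eq_zero] at h1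
  have h2 := h1.resolve_right hy
  have h3 : (lam - mu) * x 0 = 0 := by linear_combination h2
  exact sub_eq_zero.1 ((mul_eq_zero.1 h3).resolve_right hx0)

/-- With `A` replaced by a positive diagonal operator with entries at most `C / 2`, the spectrum of
`S A` is contained in `i[-C, C]`. -/
lemma isUnit_sub_of_pos_diagonal {a : ℤ → ℝ} {C : ℝ} (hC : 0 ≤ C) (ha0 : ∀ n, 0 ≤ a n)
    (ha : ∀ n, a n ≤ C / 2) {A S : BiSeq →L[ℂ] BiSeq} (hA : ∀ x n, A x n = a n * x n)
    (hS : ∀ x y, inner ℂ (S x) y = -inner ℂ x (S y)) (hSn : ‖S‖ ≤ 2) {lam : ℂ}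
    (hlam : ¬ (lam.re = 0 ∧ |lam.im| ≤ C)) :
    IsUnit (S * A - algebraMap ℂ (BiSeq →L[ℂ] BiSeq) lam) := by
  obtain ⟨D, hD, hDn, hDs⟩ := exists_diagonal (fun n => √(a n)) (√(C / 2)) (Real.sqrt_nonneg _)
    (fun n => by
      rw [abs_of_nonneg (Real.sqrt_nonneg _)]
      exact Real.sqrt_le_sqrt (ha n))
  have hDD : D * D = A := by
    ext x : 1
    refine BiSeq.ext fun n => ?_
    change D (D x) n = A x n
    rw [hD, hD, hA, ← mul_assoc, ← Complex.ofReal_mul, Real.mul_self_sqrt (ha0 n)]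
  by_contra hnu
  have hmem : lam ∈ spectrum ℂ (S * D * D) := by
    rw [mul_assoc, hDD, spectrum.mem_iff, ← IsUnit.neg_iff, neg_sub]
    exact hnu
  have hne : lam ≠ 0 := by
    rintro rfl
    exact hlam (by simpa using hC)
  have hmem' : lam ∈ spectrum ℂ (D * (S * D)) \ {0} := by
    rw [← spectrum.nonzero_mul_comm]
    exact ⟨hmem, hne⟩
  have hskew : ∀ x y, inner ℂ ((D * (S * D)) x) y = -inner ℂ x ((D * (S * D)) y) := by
    intro x y
    change inner ℂ (D (S (D x))) y = -inner ℂ x (D (S (D y)))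
    rw [hDs, hS, hDs]
  have hnt : Nontrivial BiSeq := ⟨⟨lp.single 2 0 1, 0, fun h => by
    have := congrArg (fun z : BiSeq => z 0) h
    simp at this⟩⟩
  obtain ⟨h1, h2⟩ := spectrum_subset_of_skew _ hskew hmem'.1
  refine hlam ⟨h1, h2.trans ?_⟩
  calc ‖D * (S * D)‖ ≤ ‖D‖ * (‖S‖ * ‖D‖) := (norm_mul_le _ _).trans (by gcongr; exact norm_mul_le _ _)
    _ ≤ √(C / 2) * (2 * √(C / 2)) := by gcongr
    _ = C := by
      have := Real.mul_self_sqrt (show 0 ≤ C / 2 by positivity)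
      linear_combination 2 * this

/-- The extension of `u : ℕ → ℝ` to `ℤ` with `U (-k) = (-1) ^ k u k`. -/
noncomputable def alternatingExtension (u : ℕ → ℝ) : ℤ → ℝ
  | Int.ofNat k => u k
  | Int.negSucc k => (-1) ^ (k + 1) * u (k + 1)

lemma alternatingExtension_natCast (u : ℕ → ℝ) (k : ℕ) : alternatingExtension u k = u k := rfl

lemma alternatingExtension_neg (u : ℕ → ℝ) (k : ℕ) :
    alternatingExtension u (-k) = (-1) ^ k * u k := by
  cases k with
  | zero => simpa using alternatingExtension_natCast u 0
  | succ k => rfl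

lemma alternatingExtension_recurrence {α : ℝ} (h0 : 0 < α) (h1 : α < 1) {l : ℝ} {u : ℕ → ℝ}
    (hbd : u 1 * ((1 - α ^ 2) / α) = l * u 0)
    (hrec : ∀ k : ℕ, u (k + 2) = u k - l / lineCoef α ((k : ℤ) + 1) * u (k + 1)) (n : ℤ) :
    alternatingExtension u (n - 1) - alternatingExtension u (n + 1)
      = l * (alternatingExtension u n / lineCoef α n) := by
  have hzero : alternatingExtension u (0 - 1) - alternatingExtension u (0 + 1)
      = l * (alternatingExtension u 0 / lineCoef α 0) := by
    have e1 := alternatingExtension_neg u 1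
    have e2 := alternatingExtension_natCast u 1
    have e3 := alternatingExtension_natCast u 0
    have e4 : lineCoef α 0 = -((1 - α ^ 2) / (2 * α)) := by
      simp only [lineCoef, Int.cast_zero]
      field_simp
      ring
    have h2 : 1 - α ^ 2 ≠ 0 := by nlinarith
    norm_num at e1 e2 e3 ⊢
    rw [e1, e2, e3, e4]
    field_simp at hbd ⊢
    linear_combination -2 * hbd
  obtain ⟨k, rfl | rfl⟩ := n.eq_nat_or_neg
  · cases k with
    | zero =>
      simpa using hzero
    | succ k =>
      rw [show ((k + 1 : ℕ) : ℤ) - 1 = k by push_cast; ring,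
        show ((k + 1 : ℕ) : ℤ) + 1 = ((k + 2 : ℕ) : ℤ) by push_cast; ring]
      simp only [alternatingExtension_natCast, hrec]
      push_cast
      ring
  · cases k with
    | zero =>
      simpa using hzero
    | succ k =>
      rw [show -((k + 1 : ℕ) : ℤ) - 1 = -((k + 2 : ℕ) : ℤ) by push_cast; ring,
        show -((k + 1 : ℕ) : ℤ) + 1 = -(k : ℤ) by push_cast; ring, lineCoef_neg]
      simp only [alternatingExtension_neg, hrec]
      push_cast
      ring

lemma exists_eigenvector {α : ℝ} (h0 : 0 < α) (h1 : α < 1) {l : ℝ} (hl : 0 < l) {u : ℕ → ℝ}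
    (hpos : ∀ k, 0 < u k) (hbd : u 1 * ((1 - α ^ 2) / α) = l * u 0)
    (hrec : ∀ k : ℕ, u (k + 2) = u k - l / lineCoef α ((k : ℤ) + 1) * u (k + 1)) :
    ∃ x : BiSeq, x ≠ 0 ∧ ∀ n, (lineCoef α (n - 1) : ℂ) * x (n - 1)
      - lineCoef α (n + 1) * x (n + 1) = l * x n := by
  have hne := lineCoef_ne_zero h0 h1
  have hb : ∀ k : ℕ, 0 < lineCoef α ((k : ℤ) + 1) := fun k => lineCoef_pos h0 (by omega)
  have hs : Summable fun k : ℕ => (u k / lineCoef α k) ^ 2 := by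
    rw [← summable_nat_add_iff 1]
    refine ((summable_of_pos_solution hb hl hrec hpos).mul_left (1 / lineCoef α 1)).of_nonneg_of_le
      (fun k => sq_nonneg _) fun k => ?_
    have h2 : lineCoef α 1 ≤ lineCoef α ((k : ℤ) + 1) := by
      simpa using monotone_lineCoef h0 (Nat.zero_le k)
    have h3 : 0 < lineCoef α 1 := lineCoef_pos h0 one_ne_zero
    have h4 := hb k
    push_cast
    rw [div_pow, sq (lineCoef α ((k : ℤ) + 1)), div_mul_div_comm, one_mul]
    gcongr
  let f : ℤ → ℂ := fun n => ((alternatingExtension u n / lineCoef α n : ℝ) : ℂ)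
  have hf : Summable fun n => ‖f n‖ ^ 2 := by
    refine Summable.of_nat_of_neg ?_ ?_
    · refine hs.congr fun k => ?_
      simp only [f, alternatingExtension_natCast, Complex.norm_real, Real.norm_eq_abs, sq_abs]
    · refine hs.congr fun k => ?_
      simp only [f, alternatingExtension_neg, lineCoef_neg, Complex.norm_real, Real.norm_eq_abs,
        sq_abs, div_pow, mul_pow]
      rw [← pow_mul, mul_comm k, pow_mul, neg_one_sq, one_pow, one_mul]
  refine ⟨⟨f, memlp_two_of_summable hf⟩, fun h => ?_, fun n => ?_⟩
  · have h2 : f 0 = 0 := congrArg (fun z : BiSeq => z 0) h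
    have h3 : alternatingExtension u 0 / lineCoef α 0 = 0 := Complex.ofReal_eq_zero.1 h2
    exact (div_ne_zero (hpos 0).ne' (hne 0)) h3
  · change (lineCoef α (n - 1) : ℂ) * f (n - 1) - lineCoef α (n + 1) * f (n + 1) = l * f n
    have h2 := alternatingExtension_recurrence h0 h1 hbd hrec n
    rw [← mul_div_cancel₀ (alternatingExtension u (n - 1)) (hne (n - 1)),
      ← mul_div_cancel₀ (alternatingExtension u (n + 1)) (hne (n + 1))] at h2
    simp only [f]
    exact_mod_cast h2

/-- Conjugation by `(-1) ^ n` reverses the sign of eigenvalues. -/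
lemma exists_eigenvector_neg {a : ℤ → ℝ} {lam : ℂ} {x : BiSeq} (hx : x ≠ 0)
    (h : ∀ n, (a (n - 1) : ℂ) * x (n - 1) - a (n + 1) * x (n + 1) = lam * x n) :
    ∃ y : BiSeq, y ≠ 0 ∧ ∀ n, (a (n - 1) : ℂ) * y (n - 1) - a (n + 1) * y (n + 1) = -lam * y n := by
  obtain ⟨J, hJ, -⟩ := exists_weightedShift (Equiv.refl ℤ) (fun n => (-1) ^ n) 1 zero_le_one
    (by simp)
  simp only [Equiv.refl_apply] at hJ
  refine ⟨J x, fun h0 => hx (BiSeq.ext fun n => ?_), fun n => ?_⟩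
  · have := hJ x n
    rw [h0] at this
    exact (mul_eq_zero.1 this.symm).resolve_left (zpow_ne_zero n (by norm_num))
  · rw [hJ, hJ, hJ, zpow_sub_one₀ (by norm_num), zpow_add_one₀ (by norm_num)]
    norm_num
    linear_combination -(-1) ^ n * h n

section Operator

variable {α : ℝ} {L : BiSeq →L[ℂ] BiSeq}

/-- A point of `i(-α, α)` admits no `ℓ²` solution of the eigenvalue equation off the origin. -/
lemma eq_zero_of_eigen_off_zero (h0 : 0 < α) (h1 : α < 1) {s : ℝ} (hs : |s| < α) {x : BiSeq}
    (hx : ∀ n ≠ 0, (lineCoef α (n - 1) : ℂ) * x (n - 1) - lineCoef α (n + 1) * x (n + 1)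
      = s * Complex.I * x n) : x = 0 := by
  obtain ⟨C, -, hC⟩ := exists_abs_lineCoef_le h0
  refine BiSeq.ext fun n => ?_
  have h := eq_zero_of_oscillatory_int h0 hs (tendsto_rotate hC x)
    (fun n hn => rotate_recurrence (lineCoef_ne_zero h0 h1 n) (hx n hn)) n
  have h2 : (lineCoef α n : ℂ) ≠ 0 := by exact_mod_cast lineCoef_ne_zero h0 h1 n
  simpa [h2, zpow_ne_zero n Complex.I_ne_zero] using h

open Filter Topology in
/-- There are no purely imaginary eigenvalues. -/
lemma eq_zero_of_imaginary_eigen (h0 : 0 < α) (h1 : α < 1) {s : ℝ} {x : BiSeq}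
    (hx : ∀ n, (lineCoef α (n - 1) : ℂ) * x (n - 1) - lineCoef α (n + 1) * x (n + 1)
      = s * Complex.I * x n) : x = 0 := by
  rcases lt_or_ge |s| α with hs | hs
  · exact eq_zero_of_eigen_off_zero h0 h1 hs fun n _ => hx n
  obtain ⟨C, -, hC⟩ := exists_abs_lineCoef_le h0
  set v : ℤ → ℂ := fun n => Complex.I ^ n * (lineCoef α n * x n) with hv
  have hlim : Tendsto v cofinite (𝓝 0) := tendsto_rotate hC x
  have hrec : ∀ n, v (n - 1) + v (n + 1) = ((s * (1 / lineCoef α n) : ℝ) : ℂ) * v n := fun n =>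
    rotate_recurrence (lineCoef_ne_zero h0 h1 n) (hx n)
  have hre := eq_zero_of_hyperbolic h0 h1 hs (v := fun n => (v n).re)
    ((Complex.continuous_re.tendsto 0).comp hlim) fun n => by
      simpa only [Complex.add_re, Complex.re_ofReal_mul] using congrArg Complex.re (hrec n)
  have him := eq_zero_of_hyperbolic h0 h1 hs (v := fun n => (v n).im)
    ((Complex.continuous_im.tendsto 0).comp hlim) fun n => by
      simpa only [Complex.add_im, Complex.im_ofReal_mul] using congrArg Complex.im (hrec n)
  refine BiSeq.ext fun n => ?_
  have h : v n = 0 := Complex.ext (hre n) (him n)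
  have h2 : (lineCoef α n : ℂ) ≠ 0 := by exact_mod_cast lineCoef_ne_zero h0 h1 n
  simpa [hv, h2, zpow_ne_zero n Complex.I_ne_zero] using h

lemma eigen_iff (hL : ∀ (x : BiSeq) n, L x n
      = (lineCoef α (n - 1) : ℂ) * x (n - 1) - lineCoef α (n + 1) * x (n + 1))
    {lam : ℂ} {x : BiSeq} :
    L x = lam • x ↔ ∀ n, (lineCoef α (n - 1) : ℂ) * x (n - 1) - lineCoef α (n + 1) * x (n + 1)
      = lam * x n := by
  constructor
  · intro h n
    rw [← hL, h]
    rfl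
  · intro h
    refine BiSeq.ext fun n => ?_
    rw [hL, h]
    rfl

lemma segment_subset_spectrum (h0 : 0 < α) (h1 : α < 1) (hL : ∀ (x : BiSeq) n, L x n
      = (lineCoef α (n - 1) : ℂ) * x (n - 1) - lineCoef α (n + 1) * x (n + 1))
    {t : ℝ} (ht : |t| ≤ α) : (t : ℂ) * Complex.I ∈ spectrum ℂ L := by
  have hopen : ∀ s ∈ Set.Ioo (-α) α, ((s : ℝ) : ℂ) * Complex.I ∈ spectrum ℂ L := by
    intro s hs hu
    rw [spectrum.mem_resolventSet_iff, ContinuousLinearMap.isUnit_iff_bijective] at hu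
    obtain ⟨x, hx⟩ := hu.2 (lp.single 2 0 1)
    have hcoord : ∀ n, s * Complex.I * x n - L x n = (lp.single 2 0 1 : BiSeq) n := fun n => by
      rw [← hx]
      rfl
    have hx0 : x = 0 := eq_zero_of_eigen_off_zero h0 h1 (abs_lt.2 hs) fun n hn => by
      have := hcoord n
      rw [lp.single_apply_ne _ _ _ hn, hL] at this
      linear_combination -this
    have := hcoord 0
    simp [hx0] at this
  have hclosed : IsClosed ((fun s : ℝ => (s : ℂ) * Complex.I) ⁻¹' spectrum ℂ L) :=
    (spectrum.isClosed L).preimage (by fun_prop)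
  have hsub := closure_minimal (fun s hs => hopen s hs) hclosed
  rw [closure_Ioo (by linarith)] at hsub
  exact hsub (abs_le.1 ht)

/-- Off the segment `i[-α, α]`, every point of the spectrum is an eigenvalue. -/
lemma exists_eigenvector_of_mem_spectrum (h0 : 0 < α) (hL : ∀ (x : BiSeq) n, L x n
      = (lineCoef α (n - 1) : ℂ) * x (n - 1) - lineCoef α (n + 1) * x (n + 1))
    {lam : ℂ} (hlam : lam ∈ spectrum ℂ L) (hoff : ¬ (lam.re = 0 ∧ |lam.im| ≤ α)) :
    ∃ x, x ≠ 0 ∧ L x = lam • x := by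
  obtain ⟨S, hS, hSn, hSk⟩ := exists_skewShift
  let a : ℤ → ℝ := Function.update (lineCoef α) 0 (α / 2)
  have ha0 : a 0 = α / 2 := Function.update_self ..
  have han : ∀ n ≠ 0, a n = lineCoef α n := fun n hn => Function.update_of_ne hn ..
  have hnn : ∀ n, 0 ≤ a n := fun n => by
    rcases eq_or_ne n 0 with rfl | hn
    · rw [ha0]
      positivity
    · rw [han n hn]
      exact (lineCoef_pos h0 hn).le
  have hle : ∀ n, a n ≤ α / 2 := fun n => by
    rcases eq_or_ne n 0 with rfl | hn
    · exact ha0.le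
    · rw [han n hn]
      exact lineCoef_le h0 n
  obtain ⟨A, hA, -, -⟩ := exists_diagonal a (α / 2) (by positivity) fun n => by
    rw [abs_of_nonneg (hnn n)]
    exact hle n
  have hunit := isUnit_sub_of_pos_diagonal h0.le hnn hle hA hSk hSn hoff
  let e : BiSeq := lp.single 2 0 1
  let φ : BiSeq →L[ℂ] ℂ := lp.evalCLM ℂ (fun _ : ℤ => ℂ) 2 0
  let y : BiSeq := ((lineCoef α 0 - α / 2 : ℝ) : ℂ) • S e
  have hdecomp : ∀ x, (S * A - algebraMap ℂ (BiSeq →L[ℂ] BiSeq) lam + φ.smulRight y) x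
      = L x - lam • x := by
    intro x
    have hx : ∀ n, (lineCoef α n : ℂ) * x n
        = A x n + x 0 * (((lineCoef α 0 - α / 2 : ℝ) : ℂ) * e n) := by
      intro n
      rw [hA]
      rcases eq_or_ne n 0 with rfl | hn
      · rw [ha0, lp.single_apply_self]
        push_cast
        ring
      · rw [han n hn, lp.single_apply_ne _ _ _ hn]
        ring
    refine BiSeq.ext fun n => ?_
    change S (A x) n - lam * x n + x 0 * (((lineCoef α 0 - α / 2 : ℝ) : ℂ) * S e n)
      = L x n - lam * x n
    rw [hL, hS, hS, hx, hx]
    ring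
  by_contra! hno
  refine hlam ?_
  rw [spectrum.mem_resolventSet_iff, ← IsUnit.neg_iff, neg_sub]
  have hu := isUnit_add_smulRight_of_injective _ hunit φ y fun x hx => by
    by_contra hx0
    rw [hdecomp, sub_eq_zero] at hx
    exact hno x hx0 hx
  convert hu using 1
  ext x : 1
  rw [hdecomp]
  rfl

lemma eigenvalue_unique_of_same_sign (h0 : 0 < α) (hL : ∀ (x : BiSeq) n, L x n
      = (lineCoef α (n - 1) : ℂ) * x (n - 1) - lineCoef α (n + 1) * x (n + 1))
    {lam mu : ℂ} (hre : 0 < lam.re * mu.re) {x y : BiSeq} (hx : x ≠ 0) (hy : y ≠ 0)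
    (hxe : L x = lam • x) (hye : L y = mu • y) : lam = mu := by
  obtain ⟨S, hS, -, hSk⟩ := exists_skewShift
  obtain ⟨C, hC0, hC⟩ := exists_abs_lineCoef_le h0
  obtain ⟨A, hA, -, hAs⟩ := exists_diagonal (lineCoef α) C hC0 hC
  have hSA : ∀ x, S (A x) = L x := fun x => BiSeq.ext fun n => by rw [hS, hA, hA, hL]
  exact eigenvalue_unique (fun n hn => lineCoef_pos h0 hn) hA hAs hSk hre hx hy
    ((hSA x).trans hxe) ((hSA y).trans hye)

end Operator

lemma exists_real_eigenvalue {α : ℝ} (h0 : 0 < α) (hα : α < 0.8469) :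
    ∃ l : ℝ, 0 < l ∧ α ^ 2 * (1 - α ^ 2) / (2 * (α ^ 2 + 1))
          - α ^ 4 * (α ^ 2 + 3) / (4 * (α ^ 2 + 1) * (α ^ 2 + 4)) < l ^ 2
      ∧ l ^ 2 < α ^ 2 * (1 - α ^ 2) / (2 * (α ^ 2 + 1))
      ∧ ∃ x : BiSeq, x ≠ 0 ∧ ∀ n, (lineCoef α (n - 1) : ℂ) * x (n - 1)
        - lineCoef α (n + 1) * x (n + 1) = l * x n := by
  have h1 : α < 1 := hα.trans (by norm_num)
  have hb : ∀ k : ℕ, 0 < lineCoef α ((k : ℤ) + 1) := fun k => lineCoef_pos h0 (by omega)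
  have e0 : lineCoef α (((0 : ℕ) : ℤ) + 1) = α ^ 3 / (2 * (α ^ 2 + 1)) := by
    simp only [lineCoef]
    push_cast
    field_simp
    ring
  have e1 : lineCoef α (((1 : ℕ) : ℤ) + 1) = α * (α ^ 2 + 3) / (2 * (α ^ 2 + 4)) := by
    simp only [lineCoef]
    push_cast
    field_simp
    ring
  have hβ : lineCoef α (((1 : ℕ) : ℤ) + 1) < (1 - α ^ 2) / α := by
    rw [e1, div_lt_div_iff₀ (by positivity) h0]
    have h2 : α ^ 2 < 0.71724 := by nlinarith
    nlinarith [sq_nonneg α]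
  obtain ⟨l, hl, hlo, hhi, u, hpos, hbd, hrec⟩ := exists_pos_solution hb hβ
  refine ⟨l, hl, lt_of_eq_of_lt ?_ hlo, lt_of_lt_of_eq hhi ?_,
    exists_eigenvector h0 h1 hl hpos hbd hrec⟩
  · rw [e0, e1]
    field_simp
    ring
  · rw [e0]
    field_simp

/-- For the inviscid (linearized Euler) line-`k̂ = (0,−1)` operator
`(L₀ω)_n = A_{n−1}ω_{n−1} − A_{n+1}ω_{n+1}` on `ℓ²(ℤ;ℂ)` with
`α ∈ (0.5, 0.8469)`: there is `l0 > 0`, satisfying the stated bounds, such that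
`l0` and `−l0` are the only eigenvalues, and the spectrum equals
`{l0, −l0} ∪ [−iα, iα]` (the segment being continuous spectrum). -/
theorem euler_line_zero_neg_one_spectrum
    (α : ℝ) (hα : 0.5 < α ∧ α < 0.8469)
    (L : lp (fun _ : ℤ => ℂ) 2 →L[ℂ] lp (fun _ : ℤ => ℂ) 2)
    (hL : ∀ (ω : lp (fun _ : ℤ => ℂ) 2) (n : ℤ),
      (L ω : ℤ → ℂ) n
        = (↑(coefA α (1, 0) (n - 1, -1)) : ℂ) * ω (n - 1)
          - (↑(coefA α (1, 0) (n + 1, -1)) : ℂ) * ω (n + 1)) :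
    ∃ l0 : ℝ, 0 < l0
      ∧ Real.sqrt (α ^ 2 * (1 - α ^ 2) / (2 * (α ^ 2 + 1))
          - α ^ 4 * (α ^ 2 + 3) / (4 * (α ^ 2 + 1) * (α ^ 2 + 4))) < l0
      ∧ l0 < Real.sqrt (α ^ 2 * (1 - α ^ 2) / (2 * (α ^ 2 + 1)))
      ∧ (∀ lam : ℂ,
          (∃ ω : lp (fun _ : ℤ => ℂ) 2, ω ≠ 0 ∧ L ω = lam • ω)
            ↔ (lam = (l0 : ℂ) ∨ lam = -(l0 : ℂ)))
      ∧ spectrum ℂ L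
          = {(l0 : ℂ), -(l0 : ℂ)}
            ∪ {lam : ℂ | ∃ t : ℝ, |t| ≤ α ∧ lam = t * Complex.I} := by
  obtain ⟨hα₁, hα₂⟩ := hα
  have h0 : 0 < α := lt_trans (by norm_num) hα₁
  have h1 : α < 1 := hα₂.trans (by norm_num)
  simp only [coefA_eq_lineCoef] at hL
  obtain ⟨l, hl, hlo, hhi, x, hx, hxe⟩ := exists_real_eigenvalue h0 hα₂
  obtain ⟨y, hy, hye⟩ := exists_eigenvector_neg hx hxe
  have hxL := (eigen_iff hL).2 hxe
  have hyL := (eigen_iff hL).2 hye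
  have heig : ∀ lam : ℂ, (∃ z : BiSeq, z ≠ 0 ∧ L z = lam • z)
      ↔ (lam = (l : ℂ) ∨ lam = -(l : ℂ)) := by
    refine fun lam => ⟨?_, ?_⟩
    · rintro ⟨z, hz, hze⟩
      rcases lt_trichotomy lam.re 0 with hre | hre | hre
      · exact .inr (eigenvalue_unique_of_same_sign h0 hL
          (mul_pos_of_neg_of_neg hre (by simpa using hl)) hz hy hze hyL)
      · have hlam : lam = lam.im * Complex.I := by
          apply Complex.ext <;> simp [hre]
        rw [hlam] at hze
        exact absurd (eq_zero_of_imaginary_eigen h0 h1 ((eigen_iff hL).1 hze)) hz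
      · exact .inl (eigenvalue_unique_of_same_sign h0 hL (mul_pos hre (by simpa using hl))
          hz hx hze hxL)
    · rintro (rfl | rfl)
      · exact ⟨x, hx, hxL⟩
      · exact ⟨y, hy, hyL⟩
  refine ⟨l, hl, (Real.sqrt_lt' hl).2 hlo, (Real.lt_sqrt hl.le).2 hhi, heig, ?_⟩
  ext lam
  constructor
  · intro hlam
    by_cases hseg : lam.re = 0 ∧ |lam.im| ≤ α
    · refine .inr ⟨lam.im, hseg.2, ?_⟩
      apply Complex.ext <;> simp [hseg.1]
    · exact .inl ((heig lam).1 (exists_eigenvector_of_mem_spectrum h0 hL hlam hseg))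
  · rintro (hlam | ⟨t, ht, rfl⟩)
    · obtain ⟨z, hz, hze⟩ := (heig lam).2 hlam
      intro hu
      rw [spectrum.mem_resolventSet_iff, ContinuousLinearMap.isUnit_iff_bijective] at hu
      refine hz ((injective_iff_map_eq_zero _).1 hu.1 z ?_)
      change lam • z - L z = 0
      rw [hze, sub_self]
    · exact segment_subset_spectrum h0 h1 hL ht
end
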